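/- arXiv:2002.09294 — 3 statements merged into one kernel-verified Lean document; each statement's English description precedes it below -/
import Mathlib

section
/- Let X be a standard Borel space and E an aperiodic countable Borel equivalence relation on X admitting an E-invariant Borel probability measure. Then there is a Borel coboundary ρ : E → (0,∞) such that there is neither an injective Borel compression of the quotient of ρ by a finite Borel subequivalence relation of E nor a ρ-invariant Borel probability measure. -/
open MeasureTheory Set ENNReal

namespace CocycleNadkarni

variable {X : Type*} {Γ : Type*}

/-- The `ρ`-size of `Y` relative to the point `z`: `∑_{y ∈ Y} ρ(y, z)`. -/
noncomputable def eSize (ρ : X → X → ℝ) (Y : Set X) (z : X) : ℝ≥0∞ :=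
  ∑' y : Y, ENNReal.ofReal (ρ y z)

/-- The `ρ`-size of `Y` relative to the set `Z`, computed at the point `z`. -/
noncomputable def relSize (ρ : X → X → ℝ) (Y Z : Set X) (z : X) : ℝ≥0∞ :=
  eSize ρ Y z / eSize ρ Z z

/-- Real-valued `ρ`-size (used for finite sets). -/
noncomputable def rSize (ρ : X → X → ℝ) (Y : Set X) (z : X) : ℝ :=
  ∑' y : Y, ρ y z

/-- `∫_C f dμ^ρ_S`, computed at the point `z`. -/
noncomputable def avgOn (ρ : X → X → ℝ) (f : X → ℝ) (S C : Set X) (z : X) : ℝ :=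
  (∑' y : ↥(S ∩ C), f y * ρ y z) / rSize ρ S z

/-- countable Borel equivalence relation -/
def IsCBER [MeasurableSpace X] (E : X → X → Prop) : Prop :=
  Equivalence E ∧ MeasurableSet {p : X × X | E p.1 p.2} ∧ ∀ x : X, {y | E x y}.Countable

/-- Borel cocycle `ρ : E → (0, ∞)` (as a total function whose values off `E` are irrelevant). -/
def IsCocycle [MeasurableSpace X] (E : X → X → Prop) (ρ : X → X → ℝ) : Prop :=
  Measurable (fun p : X × X => ρ p.1 p.2) ∧
    (∀ ⦃x y : X⦄, E x y → 0 < ρ x y) ∧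
    ∀ ⦃x y z : X⦄, E x y → E y z → ρ x z = ρ x y * ρ y z

/-- Borel cocycle into a group `Γ`. -/
def IsGrpCocycle [MeasurableSpace X] [Group Γ] [MeasurableSpace Γ]
    (E : X → X → Prop) (ρ : X → X → Γ) : Prop :=
  Measurable (fun p : X × X => ρ p.1 p.2) ∧
    ∀ ⦃x y z : X⦄, E x y → E y z → ρ x z = ρ x y * ρ y z

/-- finite Borel subequivalence relation of `E` -/
def IsFinSubequiv [MeasurableSpace X] (E F : X → X → Prop) : Prop :=
  Equivalence F ∧ MeasurableSet {p : X × X | F p.1 p.2} ∧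
    (∀ ⦃x y : X⦄, F x y → E x y) ∧ ∀ x : X, {y | F x y}.Finite

/-- finite Borel subequivalence relation of `E` restricted to `W` (extended by the diagonal). -/
def IsFinSubequivOn [MeasurableSpace X] (E : X → X → Prop) (W : Set X)
    (F : X → X → Prop) : Prop :=
  Equivalence F ∧ MeasurableSet {p : X × X | F p.1 p.2} ∧
    (∀ ⦃x y : X⦄, F x y → x = y ∨ (E x y ∧ x ∈ W ∧ y ∈ W)) ∧ ∀ x : X, {y | F x y}.Finite

/-- `ρ`-invariance of a Borel measure. -/
def IsInvariant [MeasurableSpace X] (E : X → X → Prop) (ρ : X → X → ℝ)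
    (μ : Measure X) : Prop :=
  ∀ T : X ≃ᵐ X, (∀ x, E (T x) x) → ∀ B : Set X, MeasurableSet B →
    μ (T '' B) = ∫⁻ x in B, ENNReal.ofReal (ρ (T x) x) ∂μ

/-- invariance w.r.t. the restriction of `ρ` to a set `R` of pairs, via Borel injections
whose graphs are contained in `R⁻¹`. -/
def IsInvariantRel [MeasurableSpace X] (R : Set (X × X)) (ρ : X → X → ℝ)
    (μ : Measure X) : Prop :=
  ∀ (B : Set X) (T : X → X), MeasurableSet B → Measurable T → Set.InjOn T B →
    (∀ x ∈ B, ((T x, x) : X × X) ∈ R) →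
    μ (T '' B) = ∫⁻ x in B, ENNReal.ofReal (ρ (T x) x) ∂μ

/-- a Borel ℕ-coloring of the lacunarity digraph `G^ρ_Z`. -/
def HasColoring [MeasurableSpace X] (E : X → X → Prop) (ρ : X → X → Γ)
    (Z : Set Γ) : Prop :=
  ∃ c : X → ℕ, Measurable c ∧
    ∀ ⦃x y : X⦄, x ≠ y → E x y → ρ x y ∈ Z → c x ≠ c y

/-- smoothness of the cocycle `ρ` restricted to `E` restricted to `W`. -/
def SmoothOn [MeasurableSpace X] (E : X → X → Prop) (ρ : X → X → ℝ)
    (W : Set X) : Prop :=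
  ∃ U : Set ℝ, IsOpen U ∧ (1:ℝ) ∈ U ∧ U ⊆ Set.Ioi 0 ∧
    ∃ c : X → ℕ, Measurable c ∧
      ∀ ⦃x y : X⦄, x ∈ W → y ∈ W → x ≠ y → E x y → ρ x y ∈ U → c x ≠ c y

/-- smoothness of the cocycle `ρ` on `E`. -/
def Smooth [MeasurableSpace X] (E : X → X → Prop) (ρ : X → X → ℝ) : Prop :=
  SmoothOn E ρ Set.univ

/-- `E`-invariance of a set. -/
def EInvariant (E : X → X → Prop) (B : Set X) : Prop :=
  ∀ ⦃x y : X⦄, E x y → x ∈ B → y ∈ B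

/-- a compression of `ρ` over the finite subequivalence relation `F` of `E`. -/
def CompressionOver [MeasurableSpace X] (E F : X → X → Prop) (ρ : X → X → ℝ)
    (φ : X → X) : Prop :=
  (∀ x, E x (φ x)) ∧
  (∀ x : X, relSize ρ (φ ⁻¹' {y | F y x}) {y | F y x} x ≤ 1) ∧
  (∀ x : X, ∃ y, E x y ∧ relSize ρ (φ ⁻¹' {z | F z y}) {z | F z y} y < 1)

/-- a compression of the quotient of `ρ | E | W` by the finite subequivalence relation given
by the setoid `s`, expressed via representatives. -/
def QuotCompressionOn [MeasurableSpace X] (E : X → X → Prop) (ρ : X → X → ℝ)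
    (W : Set X) (s : Setoid X) (φ : Quotient s → Quotient s) : Prop :=
  (∀ ⦃x : X⦄, x ∈ W → ∀ y : X, φ (Quotient.mk s x) = Quotient.mk s y → (E x y ∧ y ∈ W)) ∧
  (∀ ⦃x : X⦄, x ∈ W →
    relSize ρ {y | y ∈ W ∧ φ (Quotient.mk s y) = Quotient.mk s x} {y | s.r y x} x ≤ 1) ∧
  (∀ ⦃x : X⦄, x ∈ W → ∃ y, y ∈ W ∧ E x y ∧
    relSize ρ {z | z ∈ W ∧ φ (Quotient.mk s z) = Quotient.mk s y} {z | s.r z y} y < 1)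


/-- `B` has `ρ`-density at least `ε` relative to `W`. -/
def HasDensityAtLeastOn [MeasurableSpace X] (E : X → X → Prop) (ρ : X → X → ℝ)
    (B W : Set X) (ε : ℝ) : Prop :=
  ∃ F : X → X → Prop, IsFinSubequivOn E W F ∧
    ∀ x ∈ W, ENNReal.ofReal ε ≤ relSize ρ (B ∩ {y | F y x}) {y | F y x} x

/-- `B` has positive `ρ`-density relative to `W`. -/
def HasPosDensityOn [MeasurableSpace X] (E : X → X → Prop) (ρ : X → X → ℝ)
    (B W : Set X) : Prop :=
  ∃ ε : ℝ, 0 < ε ∧ HasDensityAtLeastOn E ρ B W ε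

/-- `B` has σ-positive `ρ`-density relative to `W`. -/
def HasSigmaPosDensityOn [MeasurableSpace X] (E : X → X → Prop) (ρ : X → X → ℝ)
    (B W : Set X) : Prop :=
  ∃ A : ℕ → Set X, (∀ n, MeasurableSet (A n)) ∧ (∀ n, A n ⊆ W) ∧
    (∀ n, ∀ x ∈ A n, ∀ y ∈ W, E x y → y ∈ A n) ∧ W = ⋃ n, A n ∧
    ∀ n, HasPosDensityOn E ρ (B ∩ A n) (A n)


set_option linter.style.haveILetI false
set_option linter.unusedSectionVars false
/-- Sets covered by countably many Borel sets on which `p` is injective. -/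
def Small {Z X : Type*} [MeasurableSpace Z] (p : Z → X) (S : Set Z) : Prop :=
  ∃ A : ℕ → Set Z, (∀ n, MeasurableSet (A n) ∧ InjOn p (A n)) ∧ S ⊆ ⋃ n, A n

theorem Small.mono {Z X : Type*} [MeasurableSpace Z] {p : Z → X} {S S' : Set Z}
    (h : Small p S) (hs : S' ⊆ S) : Small p S' := by
  obtain ⟨A, hA, hS⟩ := h
  exact ⟨A, hA, hs.trans hS⟩

theorem Small.iUnion {Z X ι : Type*} [MeasurableSpace Z] {p : Z → X} [Countable ι]
    {S : ι → Set Z} (h : ∀ i, Small p (S i)) : Small p (⋃ i, S i) := by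
  choose A hA hS using h
  cases isEmpty_or_nonempty ι
  · exact ⟨fun _ => ∅, fun n => ⟨MeasurableSet.empty, by simp⟩, by simp⟩
  obtain ⟨e, he⟩ := exists_surjective_nat (ι × ℕ)
  refine ⟨fun n => A (e n).1 (e n).2, fun n => hA _ _, ?_⟩
  intro z hz
  obtain ⟨i, hi⟩ := mem_iUnion.1 hz
  obtain ⟨k, hk⟩ := mem_iUnion.1 (hS i hi)
  obtain ⟨n, hn⟩ := he (i, k)
  exact mem_iUnion.2 ⟨n, by simpa [hn] using hk⟩

theorem Small.of_injOn {Z X : Type*} [MeasurableSpace Z] {p : Z → X} {S : Set Z}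
    (hS : MeasurableSet S) (h : InjOn p S) : Small p S :=
  ⟨fun _ => S, fun _ => ⟨hS, h⟩, by simp [Set.iUnion_const]⟩

theorem Small.union {Z X : Type*} [MeasurableSpace Z] {p : Z → X} {S T : Set Z}
    (hS : Small p S) (hT : Small p T) : Small p (S ∪ T) := by
  rw [Set.union_eq_iUnion]
  exact Small.iUnion (fun b => by cases b <;> simpa)

/-- An analytic set on which `p` is injective is contained in a Borel such set. -/
theorem exists_borel_injOn {Z X : Type*} [TopologicalSpace Z] [PolishSpace Z] [MeasurableSpace Z]
    [BorelSpace Z] [TopologicalSpace X] [PolishSpace X] [MeasurableSpace X] [BorelSpace X]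
    {p : Z → X} (hp : Continuous p) {A : Set Z} (hA : AnalyticSet A) (hi : InjOn p A) :
    ∃ T, MeasurableSet T ∧ InjOn p T ∧ A ⊆ T := by
  let V := MeasurableSpace.natGeneratingSequence Z
  have hV : ∀ n, MeasurableSet (V n) := MeasurableSpace.measurableSet_natGeneratingSequence
  have inter : ∀ B : Set Z, MeasurableSet B → AnalyticSet (A ∩ B) := by
    intro B hB
    rw [Set.inter_eq_iInter]
    exact AnalyticSet.iInter (fun b => by cases b <;> simp [hA, hB.analyticSet])
  have sep : ∀ n, MeasurablySeparable (p '' (A ∩ V n)) (p '' (A ∩ (V n)ᶜ)) := by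
    intro n
    refine ((inter _ (hV n)).image_of_continuous hp).measurablySeparable
      ((inter _ (hV n).compl).image_of_continuous hp) ?_
    rw [Set.disjoint_left]
    rintro x ⟨z, ⟨hz, hzV⟩, rfl⟩ ⟨z', ⟨hz', hzV'⟩, h⟩
    have := hi hz' hz h
    subst this
    exact hzV' hzV
  choose D hD1 hD2 hD3 using sep
  refine ⟨⋂ n, {z | z ∈ V n ↔ p z ∈ D n}, ?_, ?_, ?_⟩
  · exact MeasurableSet.iInter fun n =>
      MeasurableSet.iff (hV n) (hp.measurable (hD3 n))
  · intro z hz z' hz' h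
    apply MeasurableSpace.injective_mapNatBool Z
    funext n
    have h1 : z ∈ V n ↔ p z ∈ D n := mem_iInter.1 hz n
    have h2 : z' ∈ V n ↔ p z' ∈ D n := mem_iInter.1 hz' n
    simp only [MeasurableSpace.mapNatBool]
    rw [decide_eq_decide]
    change z ∈ V n ↔ z' ∈ V n
    rw [h1, h2, h]
  · intro z hz
    refine mem_iInter.2 fun n => ?_
    constructor
    · intro h
      exact hD1 n ⟨z, ⟨hz, h⟩, rfl⟩
    · intro h
      by_contra h'
      exact Set.disjoint_left.1 (hD2 n) ⟨z, ⟨hz, h'⟩, rfl⟩ h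

/-- cylinder sets of Baire space indexed by lists -/
def cyl (u : List ℕ) : Set (ℕ → ℕ) := {ζ | PiNat.res ζ u.length = u}

theorem cyl_res (ζ : ℕ → ℕ) (n : ℕ) : cyl (PiNat.res ζ n) = PiNat.cylinder ζ n := by
  rw [PiNat.cylinder_eq_res]
  simp [cyl]

theorem cyl_agree {u : List ℕ} {ζ ξ : ℕ → ℕ} (h : ζ ∈ cyl u) (h' : ξ ∈ cyl u) {i : ℕ}
    (hi : i < u.length) : ζ i = ξ i := by
  have : PiNat.res ζ u.length = PiNat.res ξ u.length := h.trans h'.symm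
  exact PiNat.res_eq_res.1 this hi

theorem mem_cyl_of_agree {u : List ℕ} {ζ ξ : ℕ → ℕ} (h : ζ ∈ cyl u)
    (h' : ∀ i < u.length, ξ i = ζ i) : ξ ∈ cyl u := by
  have : PiNat.res ξ u.length = PiNat.res ζ u.length := PiNat.res_eq_res.2 (fun i hi => h' i hi)
  exact this.trans h

theorem isOpen_cyl (u : List ℕ) : IsOpen (cyl u) := by
  by_cases h : (cyl u).Nonempty
  · obtain ⟨ζ, hζ⟩ := h
    have : cyl u = PiNat.cylinder ζ u.length := by
      rw [← cyl_res, show PiNat.res ζ u.length = u from hζ]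
    rw [this]
    exact PiNat.isOpen_cylinder _ _ _
  · rw [Set.not_nonempty_iff_eq_empty.1 h]; exact isOpen_empty

/-- extension of finite sequences -/
def Ext (u v : List ℕ) : Prop := cyl v ⊆ cyl u ∧ u.length < v.length

/-- the family of cylinders indexed by `Q` is not negligible -/
def NN {Z X : Type*} [MeasurableSpace Z] (p : Z → X) (g : (ℕ → ℕ) → Z)
    (Q : Set (List ℕ)) : Prop :=
  ∀ S, Small p S → ∃ x, ∀ u ∈ Q, ∃ z ∈ g '' cyl u, z ∉ S ∧ p z = x

theorem NN.mono {Z X : Type*} [MeasurableSpace Z] {p : Z → X} {g : (ℕ → ℕ) → Z}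
    {Q Q' : Set (List ℕ)} (h : NN p g Q) (hQ : Q' ⊆ Q) : NN p g Q' := by
  intro S hS
  obtain ⟨x, hx⟩ := h S hS
  exact ⟨x, fun u hu => hx u (hQ hu)⟩

section LN
variable {Z X : Type*} [TopologicalSpace Z] [PolishSpace Z] [MeasurableSpace Z]
    [BorelSpace Z] [TopologicalSpace X] [PolishSpace X] [MeasurableSpace X] [BorelSpace X]
    {p : Z → X} {g : (ℕ → ℕ) → Z}

theorem exists_sep (hg : Continuous g) {u : List ℕ} {ζ ξ : ℕ → ℕ} (h : ζ ∈ cyl u) (h' : ξ ∈ cyl u)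
    (hne : g ζ ≠ g ξ) : ∃ v w, Ext u v ∧ Ext u w ∧ Disjoint (g '' cyl v) (g '' cyl w) ∧
      ζ ∈ cyl v ∧ ξ ∈ cyl w := by
  obtain ⟨O, O', hO, hO', h1, h2, hd⟩ := t2_separation hne
  have key : ∀ (ζ : ℕ → ℕ) (O : Set Z), ζ ∈ cyl u → IsOpen O → g ζ ∈ O →
      ∃ v, Ext u v ∧ g '' cyl v ⊆ O ∧ ζ ∈ cyl v := by
    intro ζ O hζ hO hz
    have ho : IsOpen (g ⁻¹' O ∩ cyl u) := (hO.preimage hg).inter (isOpen_cyl u)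
    obtain ⟨n, hn⟩ : ∃ n, PiNat.cylinder ζ n ⊆ g ⁻¹' O ∩ cyl u := by
      letI : MetricSpace (ℕ → ℕ) := PiNat.metricSpaceNatNat
      have := (PiNat.isTopologicalBasis_cylinders (fun _ : ℕ => ℕ)).exists_subset_of_mem_open
        (show ζ ∈ g ⁻¹' O ∩ cyl u from ⟨hz, hζ⟩) ho
      obtain ⟨s, ⟨y, n, rfl⟩, hm, hs⟩ := this
      refine ⟨n, ?_⟩
      rw [PiNat.mem_cylinder_iff_eq.1 hm]
      exact hs
    have hc : PiNat.cylinder ζ (n + u.length + 1) ⊆ PiNat.cylinder ζ n :=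
      PiNat.cylinder_anti _ (by omega)
    refine ⟨PiNat.res ζ (n + u.length + 1), ⟨?_, by rw [PiNat.res_length]; omega⟩, ?_, by
      rw [cyl_res]; exact PiNat.self_mem_cylinder _ _⟩
    · rw [cyl_res]; exact fun y hy => (hn (hc hy)).2
    · rw [cyl_res]
      rintro _ ⟨y, hy, rfl⟩
      exact (hn (hc hy)).1
  obtain ⟨v, hv1, hv2, hv3⟩ := key ζ O h hO h1
  obtain ⟨w, hw1, hw2, hw3⟩ := key ξ O' h' hO' h2
  exact ⟨v, w, hv1, hw1, hd.mono hv2 hw2, hv3, hw3⟩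

theorem NN.step (hp : Continuous p) (hg : Continuous g) {u : List ℕ} {Q : Set (List ℕ)}
    (h : NN p g (insert u Q)) :
    ∃ v w, Ext u v ∧ Ext u w ∧ Disjoint (g '' cyl v) (g '' cyl w) ∧
      NN p g (insert v (insert w Q)) := by
  by_contra hcon
  push Not at hcon
  have : ∀ vw : List ℕ × List ℕ, ∃ S, Small p S ∧ (Ext u vw.1 → Ext u vw.2 →
      Disjoint (g '' cyl vw.1) (g '' cyl vw.2) →
      ∀ x, ¬ ∀ t ∈ insert vw.1 (insert vw.2 Q), ∃ z ∈ g '' cyl t, z ∉ S ∧ p z = x) := by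
    intro ⟨v, w⟩
    by_cases hh : Ext u v ∧ Ext u w ∧ Disjoint (g '' cyl v) (g '' cyl w)
    · have := hcon v w hh.1 hh.2.1 hh.2.2
      unfold NN at this
      push Not at this
      obtain ⟨S, hS, hx⟩ := this
      refine ⟨S, hS, fun _ _ _ x hx' => ?_⟩
      obtain ⟨t, ht, hz⟩ := hx x
      obtain ⟨z, hz1, hz2, hz3⟩ := hx' t ht
      exact hz z hz1 hz2 hz3
    · refine ⟨∅, Small.of_injOn MeasurableSet.empty (by simp), fun h1 h2 h3 => (hh ⟨h1, h2, h3⟩).elim⟩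
  choose S hS hSx using this
  obtain ⟨A, hA, hSA⟩ := Small.iUnion hS
  set S' := ⋃ n, A n with hS'
  have mS' : MeasurableSet S' := MeasurableSet.iUnion fun n => (hA n).1
  have sS' : Small p S' := ⟨A, hA, le_rfl⟩
  have inter : ∀ B C : Set Z, AnalyticSet B → AnalyticSet C → AnalyticSet (B ∩ C) := by
    intro B C hB hC
    rw [Set.inter_eq_iInter]
    exact AnalyticSet.iInter (fun b => by cases b <;> simp [hB, hC])
  have an : ∀ t, AnalyticSet (g '' cyl t ∩ S'ᶜ) := fun t =>
    inter _ _ ((isOpen_cyl t).analyticSet_image hg) mS'.compl.analyticSet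
  let P : Set X := ⋂ t : ↥(insert u Q), p '' (g '' cyl t ∩ S'ᶜ)
  haveI : Nonempty ↥(insert u Q) := ⟨⟨u, mem_insert _ _⟩⟩
  have anP : AnalyticSet P := AnalyticSet.iInter fun t => (an t).image_of_continuous hp
  have anA : AnalyticSet ((g '' cyl u ∩ S'ᶜ) ∩ p ⁻¹' P) := inter _ _ (an u) (anP.preimage hp)
  have inj : InjOn p ((g '' cyl u ∩ S'ᶜ) ∩ p ⁻¹' P) := by
    rintro z ⟨⟨⟨ζ, hζ, rfl⟩, hzS⟩, hzP⟩ z' ⟨⟨⟨ξ, hξ, rfl⟩, hzS'⟩, hzP'⟩ heq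
    by_contra hne
    obtain ⟨v, w, hv, hw, hd, hζv, hξw⟩ := exists_sep hg hζ hξ hne
    have hsub : S (v, w) ⊆ S' := (subset_iUnion S (v, w)).trans hSA
    refine hSx (v, w) hv hw hd (p (g ζ)) ?_
    intro t ht
    rcases ht with rfl | rfl | ht
    · exact ⟨g ζ, ⟨ζ, hζv, rfl⟩, fun hh => hzS (hsub hh), rfl⟩
    · exact ⟨g ξ, ⟨ξ, hξw, rfl⟩, fun hh => hzS' (hsub hh), heq.symm⟩
    · obtain ⟨z, ⟨hz1, hz2⟩, hz3⟩ := mem_iInter.1 hzP ⟨t, mem_insert_of_mem _ ht⟩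
      exact ⟨z, hz1, fun hh => hz2 (hsub hh), hz3⟩
  obtain ⟨T, mT, iT, hT⟩ := exists_borel_injOn hp anA inj
  obtain ⟨x, hx⟩ := h (S' ∪ T) (sS'.union (Small.of_injOn mT iT))
  have hxP : x ∈ P := by
    refine mem_iInter.2 fun t => ?_
    obtain ⟨z, hz1, hz2, hz3⟩ := hx t t.2
    exact ⟨z, ⟨hz1, fun hh => hz2 (Or.inl hh)⟩, hz3⟩
  obtain ⟨z, hz1, hz2, hz3⟩ := hx u (mem_insert _ _)
  refine hz2 (Or.inr (hT ⟨⟨hz1, fun hh => hz2 (Or.inl hh)⟩, ?_⟩))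
  simpa [hz3] using hxP

theorem NN.steps (hp : Continuous p) (hg : Continuous g) (U : List Bool → List ℕ)
    (I : Finset (List Bool)) : ∀ Q : Set (List ℕ), NN p g (U '' I ∪ Q) →
    ∃ W : List Bool → List ℕ, (∀ s ∈ I, ∀ b, Ext (U s) (W (b :: s))) ∧
      (∀ s ∈ I, Disjoint (g '' cyl (W (false :: s))) (g '' cyl (W (true :: s)))) ∧
      NN p g ({v | ∃ s ∈ I, ∃ b, v = W (b :: s)} ∪ Q) := by
  classical
  induction I using Finset.induction_on with
  | empty => intro Q h; exact ⟨fun _ => [], by simp, by simp, by simpa using h⟩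
  | insert s I hs ih =>
    intro Q h
    have h' : NN p g (insert (U s) (U '' I ∪ Q)) := by
      refine h.mono ?_
      rw [Finset.coe_insert, Set.image_insert_eq, Set.insert_union]
    obtain ⟨v, w, hv, hw, hd, hN⟩ := h'.step hp hg
    obtain ⟨W, hW1, hW2, hW3⟩ := ih (insert v (insert w Q)) (hN.mono (by
      intro t ht; simp only [mem_union, mem_insert_iff] at ht ⊢; tauto))
    let W' : List Bool → List ℕ := fun t =>
      if t = false :: s then v else if t = true :: s then w else W t
    have e0 : W' (false :: s) = v := by simp [W']
    have e1 : W' (true :: s) = w := by simp [W']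
    have e2 : ∀ t ∈ I, ∀ b, W' (b :: t) = W (b :: t) := by
      intro t ht b
      have : t ≠ s := fun h => hs (h ▸ ht)
      simp [W', this]
    refine ⟨W', ?_, ?_, hW3.mono ?_⟩
    · intro t ht b
      rcases Finset.mem_insert.1 ht with rfl | ht
      · cases b
        · rwa [e0]
        · rwa [e1]
      · rw [e2 t ht b]; exact hW1 t ht b
    · intro t ht
      rcases Finset.mem_insert.1 ht with rfl | ht
      · rwa [e0, e1]
      · rw [e2 t ht, e2 t ht]; exact hW2 t ht
    · rintro t (⟨r, hr, b, rfl⟩ | ht)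
      · rcases Finset.mem_insert.1 hr with rfl | hr
        · right
          cases b
          · rw [e0]; exact mem_insert _ _
          · rw [e1]; exact mem_insert_of_mem _ (mem_insert _ _)
        · left; exact ⟨r, hr, b, e2 r hr b⟩
      · right; exact mem_insert_of_mem _ (mem_insert_of_mem _ ht)

theorem NN.level (hp : Continuous p) (hg : Continuous g) (n : ℕ) (U : List Bool → List ℕ)
    (h : NN p g (U '' {s | s.length = n})) :
    ∃ W : List Bool → List ℕ, NN p g (W '' {s | s.length = n + 1}) ∧
      (∀ s, s.length = n → ∀ b, Ext (U s) (W (b :: s))) ∧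
      (∀ s, s.length = n → Disjoint (g '' cyl (W (false :: s))) (g '' cyl (W (true :: s)))) := by
  have hfin : {s : List Bool | s.length = n}.Finite := List.finite_length_eq Bool n
  obtain ⟨W, h1, h2, h3⟩ := NN.steps hp hg U hfin.toFinset ∅ (by simpa using h)
  refine ⟨W, h3.mono ?_, fun s hs => h1 s (by simpa using hs), fun s hs => h2 s (by simpa using hs)⟩
  rintro _ ⟨s, hs, rfl⟩
  left
  match s, hs with
  | b :: s, hs => exact ⟨s, by simpa using hs, b, rfl⟩

theorem NN.scheme (hp : Continuous p) (hg : Continuous g) (h : NN p g {[]}) :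
    ∃ U : ℕ → List Bool → List ℕ, (∀ n, NN p g (U n '' {s | s.length = n})) ∧
      (∀ n s, s.length = n → ∀ b, Ext (U n s) (U (n + 1) (b :: s))) ∧
      (∀ n s, s.length = n →
        Disjoint (g '' cyl (U (n + 1) (false :: s))) (g '' cyl (U (n + 1) (true :: s)))) := by
  choose W hW1 hW2 hW3 using fun (n : ℕ) (U : List Bool → List ℕ)
    (h : NN p g (U '' {s | s.length = n})) => NN.level hp hg n U h
  let St : (n : ℕ) → {U : List Bool → List ℕ // NN p g (U '' {s | s.length = n})} := fun n =>
    Nat.rec ⟨fun _ => [], h.mono (by rintro _ ⟨s, -, rfl⟩; rfl)⟩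
      (fun n U => ⟨W n U.1 U.2, hW1 n U.1 U.2⟩) n
  exact ⟨fun n => (St n).1, fun n => (St n).2, fun n => hW2 n (St n).1 (St n).2,
    fun n => hW3 n (St n).1 (St n).2⟩

theorem small_univ_of_continuous (hp : Continuous p) (hg : Continuous g)
    (hgs : Function.Surjective g) (hc : ∀ x, (p ⁻¹' {x}).Countable) : Small p univ := by
  by_contra hns
  have h0 : NN p g {[]} := by
    intro S hS
    have : ∃ z, z ∉ S := by
      by_contra hh
      push Not at hh
      exact hns (hS.mono (fun z _ => hh z))
    obtain ⟨z, hz⟩ := this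
    obtain ⟨ζ, rfl⟩ := hgs z
    refine ⟨p (g ζ), ?_⟩
    rintro _ rfl
    exact ⟨g ζ, ⟨ζ, by simp [cyl], rfl⟩, hz, rfl⟩
  obtain ⟨U, hN, hE, hD⟩ := NN.scheme hp hg h0
  let v : (ℕ → Bool) → ℕ → List ℕ := fun α n => U n (PiNat.res α n)
  have hext : ∀ α n, Ext (v α n) (v α (n + 1)) := fun α n =>
    hE n (PiNat.res α n) (by simp) (α n)
  have hlen : ∀ α n, n ≤ (v α n).length := by
    intro α n
    induction n with
    | zero => simp
    | succ n ih => have := (hext α n).2; omega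
  have hanti : ∀ α, Antitone (fun n => cyl (v α n)) := fun α =>
    antitone_nat_of_succ_le fun n => (hext α n).1
  -- common points
  have hcom : ∀ α β n, ∃ ζ ∈ cyl (v α n), ∃ ξ ∈ cyl (v β n), p (g ζ) = p (g ξ) := by
    intro α β n
    obtain ⟨x, hx⟩ := hN n ∅ (Small.of_injOn MeasurableSet.empty (by simp))
    obtain ⟨_, ⟨ζ, hζ, rfl⟩, -, h1⟩ := hx (v α n) ⟨PiNat.res α n, by simp, rfl⟩
    obtain ⟨_, ⟨ξ, hξ, rfl⟩, -, h2⟩ := hx (v β n) ⟨PiNat.res β n, by simp, rfl⟩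
    exact ⟨ζ, hζ, ξ, hξ, h1.trans h2.symm⟩
  have hlim : ∀ α, ∃ ζ, ∀ n, ζ ∈ cyl (v α n) := by
    intro α
    have hne : ∀ n, ∃ ζ, ζ ∈ cyl (v α n) := fun n => by
      obtain ⟨ζ, hζ, _⟩ := hcom α α n
      exact ⟨ζ, hζ⟩
    choose ζ hζ using hne
    refine ⟨fun i => ζ (i + 1) i, fun n => mem_cyl_of_agree (hζ n) fun i hi => ?_⟩
    have hm1 := hanti α (le_max_left n (i + 1)) (hζ (max n (i + 1)))
    have hm2 := hanti α (le_max_right n (i + 1)) (hζ (max n (i + 1)))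
    have h1 := cyl_agree (hζ n) hm1 hi
    have h2 := cyl_agree (hζ (i + 1)) hm2 (lt_of_lt_of_le (Nat.lt_succ_self i) (hlen α (i + 1)))
    exact h2.trans h1.symm
  choose ζ hζ using hlim
  have htend : ∀ α (ξ : ℕ → ℕ → ℕ), (∀ n, ξ n ∈ cyl (v α n)) →
      Filter.Tendsto ξ Filter.atTop (nhds (ζ α)) := by
    intro α ξ hξ
    rw [tendsto_pi_nhds]
    intro i
    refine tendsto_const_nhds.congr' ?_
    filter_upwards [Filter.eventually_ge_atTop (i + 1)] with n hn
    exact cyl_agree (hζ α n) (hξ n) (lt_of_lt_of_le (Nat.lt_of_succ_le hn) (hlen α n))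
  have hpe : ∀ α β, p (g (ζ α)) = p (g (ζ β)) := by
    intro α β
    choose a ha b hb hab using hcom α β
    have h1 := ((hp.comp hg).tendsto (ζ α)).comp (htend α a ha)
    have h2 := ((hp.comp hg).tendsto (ζ β)).comp (htend β b hb)
    refine tendsto_nhds_unique h1 (h2.congr fun n => ?_)
    exact (hab n).symm
  have hinj : Function.Injective (fun α => g (ζ α)) := by
    intro α β hαβ
    by_contra hne
    have hex : ∃ n, α n ≠ β n := Function.ne_iff.1 hne
    classical
    let n := Nat.find hex
    have hn : α n ≠ β n := Nat.find_spec hex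
    have hr : PiNat.res α n = PiNat.res β n := PiNat.res_eq_res.2 fun m hm => by
      by_contra hh; exact Nat.find_min hex hm hh
    have key : ∀ α β : ℕ → Bool, α n = false → β n = true → PiNat.res α n = PiNat.res β n →
        g (ζ α) ≠ g (ζ β) := by
      intro α β ha hb hr heq
      refine Set.disjoint_left.1 (hD n (PiNat.res α n) (by simp))
        (?_ : g (ζ α) ∈ _) ?_
      · have := hζ α (n + 1)
        simp only [v, PiNat.res_succ, ha] at this
        exact ⟨_, this, rfl⟩
      · have := hζ β (n + 1)
        simp only [v, PiNat.res_succ, hb, ← hr] at this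
        exact ⟨_, this, heq.symm⟩
    cases ha : α n <;> cases hb : β n
    · exact hn (ha.trans hb.symm)
    · exact key α β ha hb hr hαβ
    · exact key β α hb ha hr.symm hαβ.symm
    · exact hn (ha.trans hb.symm)
  let x := p (g (ζ fun _ => false))
  have hcount : (range (fun α => g (ζ α))).Countable := (hc x).mono (by
    rintro _ ⟨α, rfl⟩; exact hpe _ _)
  have : Countable (ℕ → Bool) := by
    have := hcount.to_subtype
    exact (Equiv.ofInjective _ hinj).countable_iff.2 this
  obtain ⟨e, he⟩ := exists_surjective_nat (ℕ → Bool)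
  obtain ⟨n, hn⟩ := he fun k => !(e k k)
  have := congrFun hn n
  simp at this
end LN

/-- Lusin–Novikov -/
theorem lusinNovikov {Z X : Type*} [MeasurableSpace Z] [StandardBorelSpace Z]
    [MeasurableSpace X] [StandardBorelSpace X] {p : Z → X} (hp : Measurable p)
    (hc : ∀ x, (p ⁻¹' {x}).Countable) : Small p univ := by
  cases isEmpty_or_nonempty Z
  · exact (Small.of_injOn (S := ∅) MeasurableSet.empty (by simp)).mono (fun z => isEmptyElim z)
  letI := upgradeStandardBorel X
  letI tZ := upgradeStandardBorel Z
  obtain ⟨t', hle, hcont, hpol⟩ := hp.exists_continuous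
  have hb : (inferInstance : MeasurableSpace Z) = @borel Z t' := by
    rw [borel_eq_borel_of_le hpol tZ.toPolishSpace hle]
    exact tZ.toBorelSpace.measurable_eq
  letI := t'
  haveI : @BorelSpace Z t' _ := ⟨hb⟩
  obtain ⟨g, hg, hgs⟩ := PolishSpace.exists_nat_nat_continuous_surjective Z
  exact small_univ_of_continuous hcont hg hgs hc
theorem exists_involution [MeasurableSpace X] [StandardBorelSpace X] {Q : Set (X × X)}
    (hQ : MeasurableSet Q) (hsymm : ∀ x y, (x, y) ∈ Q → (y, x) ∈ Q)
    (hfun : ∀ x y z, (x, y) ∈ Q → (x, z) ∈ Q → y = z) :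
    ∃ T : X ≃ᵐ X, (∀ x, T (T x) = x) ∧ (∀ x y, (x, y) ∈ Q → T x = y) ∧
      ∀ x, T x = x ∨ (x, T x) ∈ Q := by
  classical
  let t : X → X := fun x => if h : ∃ y, (x, y) ∈ Q then h.choose else x
  have t1 : ∀ x y, (x, y) ∈ Q → t x = y := by
    intro x y h
    have hex : ∃ y, (x, y) ∈ Q := ⟨y, h⟩
    simp only [t, dif_pos hex]
    exact hfun x _ _ hex.choose_spec h
  have t2 : ∀ x, (¬ ∃ y, (x, y) ∈ Q) → t x = x := fun x h => by simp only [t, dif_neg h]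
  have tt : ∀ x, t (t x) = x := by
    intro x
    by_cases h : ∃ y, (x, y) ∈ Q
    · obtain ⟨y, hy⟩ := h
      rw [t1 x y hy, t1 y x (hsymm _ _ hy)]
    · rw [t2 x h, t2 x h]
  have im : ∀ C : Set X, MeasurableSet C → MeasurableSet {x | ∃ y ∈ C, (x, y) ∈ Q} := by
    intro C hC
    have : {x | ∃ y ∈ C, (x, y) ∈ Q} = Prod.fst '' (Q ∩ Prod.snd ⁻¹' C) := by
      ext x
      constructor
      · rintro ⟨y, hy, h⟩; exact ⟨(x, y), ⟨h, hy⟩, rfl⟩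
      · rintro ⟨⟨x', y⟩, ⟨h, hy⟩, rfl⟩; exact ⟨y, hy, h⟩
    rw [this]
    refine (hQ.inter (measurable_snd hC)).image_of_measurable_injOn measurable_fst ?_
    rintro ⟨a, b⟩ ⟨h, -⟩ ⟨a', b'⟩ ⟨h', -⟩ heq
    obtain rfl : a = a' := heq
    rw [hfun a b b' h h']
  have mt : Measurable t := by
    intro C hC
    have : t ⁻¹' C = {x | ∃ y ∈ C, (x, y) ∈ Q} ∪ (C \ {x | ∃ y ∈ univ, (x, y) ∈ Q}) := by
      ext x
      by_cases h : ∃ y, (x, y) ∈ Q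
      · obtain ⟨y, hy⟩ := h
        have e := t1 x y hy
        simp only [mem_preimage, e, mem_union, mem_ofPred_eq, mem_sdiff, mem_univ, true_and]
        constructor
        · intro h; exact Or.inl ⟨y, h, hy⟩
        · rintro (⟨z, hz, hz'⟩ | ⟨-, hh⟩)
          · rwa [hfun x y z hy hz']
          · exact (hh ⟨y, hy⟩).elim
      · have e := t2 x h
        simp only [mem_preimage, e, mem_union, mem_ofPred_eq, mem_sdiff, mem_univ, true_and]
        constructor
        · intro hh; exact Or.inr ⟨hh, h⟩
        · rintro (⟨z, hz, hz'⟩ | ⟨hh, -⟩)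
          · exact (h ⟨z, hz'⟩).elim
          · exact hh
    rw [this]
    exact (im C hC).union (hC.diff (im univ MeasurableSet.univ))
  refine ⟨⟨⟨t, t, tt, tt⟩, mt, mt⟩, tt, t1, fun x => ?_⟩
  by_cases h : ∃ y, (x, y) ∈ Q
  · obtain ⟨y, hy⟩ := h
    right
    change (x, t x) ∈ Q
    rwa [t1 x y hy]
  · exact Or.inl (t2 x h)

/-- Feldman–Moore -/
theorem feldmanMoore [MeasurableSpace X] [StandardBorelSpace X] {E : X → X → Prop}
    (hE : IsCBER E) : ∃ T : ℕ → X ≃ᵐ X, (∀ k x, T k (T k x) = x) ∧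
      ∀ x y, E x y ↔ ∃ k, T k x = y := by
  obtain ⟨heq, hm, hc⟩ := hE
  let Z := {q : X × X | E q.1 q.2}
  haveI : StandardBorelSpace Z := MeasurableSet.standardBorel hm
  have hp : Measurable (fun z : Z => z.1.1) := measurable_fst.comp measurable_subtype_coe
  obtain ⟨A, hA, hcov⟩ := lusinNovikov hp (by
    intro x
    refine Set.MapsTo.countable_of_injOn (f := fun z : Z => z.1.2) (t := {y | E x y}) ?_ ?_ (hc x)
    · rintro ⟨⟨a, b⟩, h⟩ ha
      obtain rfl : a = x := ha
      exact h
    · rintro ⟨⟨a, b⟩, h⟩ ha ⟨⟨a', b'⟩, h'⟩ ha' hb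
      obtain rfl : a = x := ha
      obtain rfl : a' = a := ha'
      obtain rfl : b = b' := hb
      rfl)
  let G : ℕ → Set (X × X) := fun n => Subtype.val '' (A n)
  have mG : ∀ n, MeasurableSet (G n) := fun n => hm.subtype_image (hA n).1
  have GE : ∀ n x y, (x, y) ∈ G n → E x y := by
    rintro n x y ⟨z, -, h⟩
    have := z.2
    rw [h] at this
    exact this
  have Gf : ∀ n x y z, (x, y) ∈ G n → (x, z) ∈ G n → y = z := by
    rintro n x y z ⟨a, ha, h⟩ ⟨b, hb, h'⟩
    have := (hA n).2 ha hb (by simp [h, h'])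
    rw [this, h'] at h
    exact (congrArg Prod.snd h).symm
  have Gc : ∀ x y, E x y → ∃ n, (x, y) ∈ G n := by
    intro x y h
    obtain ⟨n, hn⟩ := mem_iUnion.1 (hcov (mem_univ (⟨(x, y), h⟩ : Z)))
    exact ⟨n, ⟨_, hn, rfl⟩⟩
  let V := MeasurableSpace.natGeneratingSequence X
  have hV : ∀ n, MeasurableSet (V n) := MeasurableSpace.measurableSet_natGeneratingSequence
  let R : ℕ × ℕ × ℕ → Set (X × X) := fun i =>
    (G i.1 ∩ Prod.swap ⁻¹' G i.2.1) ∩ (Prod.fst ⁻¹' (V i.2.2) ∩ Prod.snd ⁻¹' (V i.2.2)ᶜ)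
  have mR : ∀ i, MeasurableSet (R i) := fun i =>
    ((mG _).inter (measurable_swap (mG _))).inter
      ((measurable_fst (hV _)).inter (measurable_snd (hV _).compl))
  have hT := fun i => exists_involution (Q := R i ∪ Prod.swap ⁻¹' R i)
    ((mR i).union (measurable_swap (mR i)))
    (by
      rintro x y (h | h)
      · exact Or.inr h
      · exact Or.inl h)
    (by
      rintro x y z (h | h) (h' | h')
      · exact Gf _ _ _ _ h.1.1 h'.1.1
      · exact (h'.2.2 h.2.1).elim
      · exact (h.2.2 h'.2.1).elim
      · exact Gf _ _ _ _ h.1.2 h'.1.2)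
  choose T hT1 hT2 hT3 using hT
  obtain ⟨e, he⟩ := exists_surjective_nat (Option (ℕ × ℕ × ℕ))
  let T' : Option (ℕ × ℕ × ℕ) → X ≃ᵐ X := fun o => o.elim (MeasurableEquiv.refl X) T
  have a1 : ∀ o x, T' o (T' o x) = x := by
    rintro (_ | i) x
    · rfl
    · exact hT1 i x
  have a2 : ∀ o x, E x (T' o x) := by
    rintro (_ | i) x
    · exact heq.refl x
    · change E x (T i x)
      rcases hT3 i x with h' | h' | h'
      · rw [h']; exact heq.refl x
      · exact GE _ _ _ h'.1.1
      · exact GE _ _ _ h'.1.2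
  refine ⟨fun k => T' (e k), fun k x => a1 _ x, fun x y => ⟨fun h => ?_, ?_⟩⟩
  · by_cases hxy : x = y
    · obtain ⟨k, hk⟩ := he none
      exact ⟨k, by simpa [hk, T'] using hxy⟩
    · obtain ⟨n, hn⟩ := Gc x y h
      obtain ⟨m, hm'⟩ := Gc y x (heq.symm h)
      have : ∃ k, ¬ (x ∈ V k ↔ y ∈ V k) := by
        by_contra hh
        push Not at hh
        apply hxy
        apply MeasurableSpace.injective_mapNatBool X
        funext k
        simp only [MeasurableSpace.mapNatBool]
        rw [decide_eq_decide]
        exact hh k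
      obtain ⟨k, hk⟩ := this
      by_cases hx : x ∈ V k
      · have hy : y ∉ V k := fun hy => hk ⟨fun _ => hy, fun _ => hx⟩
        obtain ⟨j, hj⟩ := he (some (n, m, k))
        refine ⟨j, ?_⟩
        change T' (e j) x = y
        rw [hj]
        exact hT2 (n, m, k) x y (Or.inl ⟨⟨hn, hm'⟩, hx, hy⟩)
      · have hy : y ∈ V k := by by_contra hy; exact hk ⟨fun h => (hx h).elim, fun h => (hy h).elim⟩
        obtain ⟨j, hj⟩ := he (some (m, n, k))
        refine ⟨j, ?_⟩
        change T' (e j) x = y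
        rw [hj]
        exact hT2 (m, n, k) x y (Or.inr ⟨⟨hm', hn⟩, hy, hx⟩)
  · rintro ⟨k, rfl⟩
    exact a2 _ x


/-- A sequence of Borel involutions generating `E`. -/
structure FM [MeasurableSpace X] (E : X → X → Prop) (T : ℕ → X ≃ᵐ X) : Prop where
  invol : ∀ k x, T k (T k x) = x
  gen : ∀ x y, E x y ↔ ∃ k, T k x = y

/-- Invariance of a measure under all the involutions. -/
def Inv [MeasurableSpace X] (T : ℕ → X ≃ᵐ X) (σ : Measure X) : Prop :=
  ∀ k, ∀ q : X → ℝ≥0∞, Measurable q → ∫⁻ x, q (T k x) ∂σ = ∫⁻ x, q x ∂σ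

/-- Points for which `k` is the first index leading to `T k x`. -/
def firstSet [MeasurableSpace X] (T : ℕ → X ≃ᵐ X) (k : ℕ) : Set X := {x | ∀ j < k, T j x ≠ T k x}

section MT
variable [MeasurableSpace X] {E : X → X → Prop} {T : ℕ → X ≃ᵐ X}

theorem measurableSet_firstSet [StandardBorelSpace X] (k : ℕ) :
    MeasurableSet (firstSet T k) := by
  have : firstSet T k = ⋂ j, ⋂ (_ : j < k), {x | T j x = T k x}ᶜ := by
    ext x; simp [firstSet]
  rw [this]
  exact MeasurableSet.iInter fun j => MeasurableSet.iInter fun _ =>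
    (measurableSet_eq_fun (T j).measurable (T k).measurable).compl

theorem FM.firstSet_symm (hT : FM E T) (k : ℕ) (x : X) :
    T k x ∈ firstSet T k ↔ x ∈ firstSet T k := by
  have key : ∀ x, x ∈ firstSet T k → T k x ∈ firstSet T k := by
    intro x hx j hj h
    rw [hT.invol] at h
    apply hx j hj
    rw [← h, hT.invol, h]
  refine ⟨fun h => ?_, key x⟩
  have := key _ h
  rwa [hT.invol] at this

theorem FM.tsum_eq (hT : FM E T) (x : X) (h : X → ℝ≥0∞) (hh : ∀ y, ¬ E x y → h y = 0) :
    ∑' y, h y = ∑' k, (firstSet T k).indicator (fun x => h (T k x)) x := by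
  classical
  have e1 : ∑' k, (firstSet T k).indicator (fun x => h (T k x)) x
      = ∑' k : {k | x ∈ firstSet T k}, h (T k x) := by
    rw [tsum_subtype {k | x ∈ firstSet T k} (fun k => h (T k x))]
    refine tsum_congr fun k => ?_
    by_cases hk : x ∈ firstSet T k <;> simp [hk]
  rw [e1]
  have inj : Function.Injective (fun k : {k | x ∈ firstSet T k} => T k x) := by
    rintro ⟨k, hk⟩ ⟨l, hl⟩ hkl
    rcases lt_trichotomy k l with h | h | h
    · exact (hl k h hkl).elim
    · exact Subtype.ext h
    · exact (hk l h hkl.symm).elim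
  symm
  refine inj.tsum_eq (f := h) ?_
  intro y hy
  have hE : E x y := by by_contra hc; exact hy (hh y hc)
  have hex := (hT.gen x y).1 hE
  refine ⟨⟨Nat.find hex, fun j hj hc => Nat.find_min hex hj ?_⟩, Nat.find_spec hex⟩
  exact hc.trans (Nat.find_spec hex)

theorem FM.measurable_tsum [StandardBorelSpace X] (hT : FM E T) {h : X → X → ℝ≥0∞}
    (hm : Measurable (Function.uncurry h)) (hh : ∀ x y, ¬ E x y → h x y = 0) :
    Measurable (fun x => ∑' y, h x y) := by
  have : (fun x => ∑' y, h x y) = fun x =>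
      ∑' k, (firstSet T k).indicator (fun x => h x (T k x)) x := by
    funext x
    rw [hT.tsum_eq x (h x) (hh x)]
    refine tsum_congr fun k => ?_
    by_cases hk : x ∈ firstSet T k <;> simp [hk]
  rw [this]
  refine Measurable.tsum fun k => Measurable.indicator ?_ (measurableSet_firstSet k)
  exact hm.comp (measurable_id.prodMk (T k).measurable)

/-- the mass transport principle -/
theorem FM.mtp [StandardBorelSpace X] (hT : FM E T) (hsymm : ∀ x y, E x y → E y x)
    {σ : Measure X} (hσ : Inv T σ) {h : X → X → ℝ≥0∞}
    (hm : Measurable (Function.uncurry h)) (hh : ∀ x y, ¬ E x y → h x y = 0) :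
    ∫⁻ x, ∑' y, h x y ∂σ = ∫⁻ x, ∑' y, h y x ∂σ := by
  have e1 : ∀ x, ∑' y, h x y =
      ∑' k, (firstSet T k).indicator (fun x => h x (T k x)) x := by
    intro x
    rw [hT.tsum_eq x (h x) (hh x)]
    refine tsum_congr fun k => ?_
    by_cases hk : x ∈ firstSet T k <;> simp [hk]
  have e2 : ∀ x, ∑' y, h y x =
      ∑' k, (firstSet T k).indicator (fun x => h (T k x) x) x := by
    intro x
    rw [hT.tsum_eq x (fun y => h y x) (fun y hy => hh y x (fun h => hy (hsymm _ _ h)))]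
    refine tsum_congr fun k => ?_
    by_cases hk : x ∈ firstSet T k <;> simp [hk]
  simp_rw [e1, e2]
  have m1 : ∀ k, Measurable ((firstSet T k).indicator (fun x => h x (T k x))) := fun k =>
    Measurable.indicator (hm.comp (measurable_id.prodMk (T k).measurable))
      (measurableSet_firstSet k)
  have m2 : ∀ k, Measurable ((firstSet T k).indicator (fun x => h (T k x) x)) := fun k =>
    Measurable.indicator (hm.comp ((T k).measurable.prodMk measurable_id))
      (measurableSet_firstSet k)
  rw [lintegral_tsum fun k => (m1 k).aemeasurable, lintegral_tsum fun k => (m2 k).aemeasurable]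
  refine tsum_congr fun k => ?_
  rw [← hσ k _ (m1 k)]
  refine lintegral_congr fun x => ?_
  by_cases hk : x ∈ firstSet T k
  · have hk' := (hT.firstSet_symm k x).2 hk
    simp [hk, hk', hT.invol]
  · have hk' : T k x ∉ firstSet T k := fun hc => hk ((hT.firstSet_symm k x).1 hc)
    rw [indicator_of_notMem hk, indicator_of_notMem hk']

/-- From a `ρ`-invariant measure to an invariant one. -/
theorem FM.inv_of_invariant (hT : FM E T) (hsymm : ∀ x y, E x y → E y x)
    {ρ : X → X → ℝ} {f : X → ℝ≥0∞} (hf : Measurable f) (hf0 : ∀ x, f x ≠ 0) (hft : ∀ x, f x ≠ ⊤)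
    (hρ : ∀ x y, E x y → ENNReal.ofReal (ρ x y) = f x / f y) {ν : Measure X}
    (hν : IsInvariant E ρ ν) :
    Inv T (ν.withDensity fun x => (f x)⁻¹) := by
  intro k q hq
  have hE : ∀ x, E (T k x) x := fun x => hsymm _ _ ((hT.gen _ _).2 ⟨k, rfl⟩)
  have hmap : Measure.map (T k) (ν.withDensity fun x => f (T k x) / f x) = ν := by
    ext B hB
    rw [Measure.map_apply (T k).measurable hB,
      withDensity_apply _ ((T k).measurable hB)]
    have := hν (T k) hE _ ((T k).measurable hB)
    rw [image_preimage_eq _ (T k).surjective] at this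
    rw [this]
    exact lintegral_congr fun x => (hρ _ _ (hE x)).symm
  have m1 : Measurable fun x => f (T k x) / f x := (hf.comp (T k).measurable).div hf
  have hfi : Measurable fun x => (f x)⁻¹ := hf.inv
  have hqT : Measurable fun x => q (T k x) := hq.comp (T k).measurable
  have hfq : Measurable ((fun x => (f x)⁻¹) * q) := hfi.mul hq
  have hfqT : Measurable fun x => ((fun x => (f x)⁻¹) * q) (T k x) := hfq.comp (T k).measurable
  rw [lintegral_withDensity_eq_lintegral_mul _ hfi hqT,
    lintegral_withDensity_eq_lintegral_mul _ hfi hq]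
  conv_rhs => rw [← hmap]
  rw [lintegral_map hfq (T k).measurable,
    lintegral_withDensity_eq_lintegral_mul _ m1 hfqT]
  refine lintegral_congr fun x => ?_
  simp only [Pi.mul_apply]
  have : f (T k x) / f x * ((f (T k x))⁻¹ * q (T k x))
      = (f (T k x) * (f (T k x))⁻¹) * ((f x)⁻¹ * q (T k x)) := by
    rw [div_eq_mul_inv]; ring
  change _ = f (T k x) / f x * ((f (T k x))⁻¹ * q (T k x))
  rw [this, ENNReal.mul_inv_cancel (hf0 _) (hft _), one_mul]

/-- alive sets and masses -/
noncomputable def alive (T : ℕ → X ≃ᵐ X) (c : X → ℝ) : ℕ → Set X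
  | 0 => univ
  | k + 1 => alive T c k \ {x | x ∈ alive T c k ∧ T k x ∈ alive T c k ∧ c (T k x) < c x}

/-- points dying at stage `k` -/
def dying (T : ℕ → X ≃ᵐ X) (c : X → ℝ) (k : ℕ) : Set X :=
  {x | x ∈ alive T c k ∧ T k x ∈ alive T c k ∧ c (T k x) < c x}

/-- mass of a point at stage `k` -/
noncomputable def mass (T : ℕ → X ≃ᵐ X) (c : X → ℝ) : ℕ → X → ℝ≥0∞
  | 0 => fun _ => 1
  | k + 1 => fun x => mass T c k x + (dying T c k).indicator (mass T c k) (T k x)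

variable {c : X → ℝ}

theorem alive_succ (k : ℕ) : alive T c (k + 1) = alive T c k \ dying T c k := rfl

theorem dying_subset (k : ℕ) : dying T c k ⊆ alive T c k := fun _ h => h.1

theorem alive_anti : Antitone (alive T c) :=
  antitone_nat_of_succ_le fun k => by rw [alive_succ]; exact sdiff_subset

theorem measurable_alive (hc : Measurable c) (k : ℕ) :
    MeasurableSet (alive T c k) ∧ MeasurableSet (dying T c k) := by
  have key : ∀ k, MeasurableSet (alive T c k) → MeasurableSet (dying T c k) := fun k h =>
    h.inter (((T k).measurable h).inter (measurableSet_lt (hc.comp (T k).measurable) hc))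
  induction k with
  | zero => exact ⟨MeasurableSet.univ, key 0 MeasurableSet.univ⟩
  | succ k ih =>
    have : MeasurableSet (alive T c (k + 1)) := by rw [alive_succ]; exact ih.1.diff ih.2
    exact ⟨this, key _ this⟩

theorem measurable_mass (hc : Measurable c) (k : ℕ) : Measurable (mass T c k) := by
  induction k with
  | zero => exact measurable_const
  | succ k ih => exact ih.add ((ih.indicator (measurable_alive hc k).2).comp (T k).measurable)

theorem mass_ne_top (k : ℕ) (x : X) : mass T c k x ≠ ⊤ := by
  induction k generalizing x with
  | zero => simp [mass]
  | succ k ih =>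
    simp only [mass]
    refine ENNReal.add_ne_top.2 ⟨ih x, ?_⟩
    by_cases h : T k x ∈ dying T c k <;> simp [h, ih]

theorem mass_mono (x : X) : Monotone (fun k => mass T c k x) :=
  monotone_nat_of_le_succ fun k => by simp only [mass]; exact le_self_add

theorem FM.conserve (hT : FM E T) (hc : Measurable c) {σ : Measure X} (hσ : Inv T σ) (k : ℕ) :
    ∫⁻ x, (alive T c k).indicator (mass T c k) x ∂σ = σ univ := by
  induction k with
  | zero => simp [alive, mass]
  | succ k ih =>
    have mA := measurable_alive (T := T) hc k
    have mA' := measurable_alive (T := T) hc (k + 1)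
    have mm := measurable_mass (T := T) hc k
    rw [← ih]
    have e1 : ∀ x, (alive T c (k + 1)).indicator (mass T c (k + 1)) x =
        (alive T c (k + 1)).indicator (mass T c k) x
          + (dying T c k).indicator (mass T c k) (T k x) := by
      intro x
      by_cases hx : x ∈ alive T c (k + 1)
      · simp [hx, mass]
      · have : T k x ∉ dying T c k := by
          rintro ⟨h1, h2, h3⟩
          rw [hT.invol] at h2 h3
          apply hx
          rw [alive_succ]
          exact ⟨h2, fun h => absurd h.2.2 (not_lt.2 h3.le)⟩
        simp [hx, this]
    have e2 : ∀ x, (alive T c k).indicator (mass T c k) x =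
        (alive T c (k + 1)).indicator (mass T c k) x
          + (dying T c k).indicator (mass T c k) x := by
      intro x
      rw [alive_succ]
      by_cases hx : x ∈ alive T c k
      · by_cases hd : x ∈ dying T c k <;> simp [hx, hd]
      · have hd : x ∉ dying T c k := fun h => hx h.1
        simp [hx, hd]
    simp_rw [e1, e2]
    rw [lintegral_add_left (mm.indicator mA'.1), lintegral_add_left (mm.indicator mA'.1),
      hσ k _ (mm.indicator mA.2)]

/-- The density. -/
theorem FM.exists_density [StandardBorelSpace X] (hT : FM E T) (hE : IsCBER E)
    (haper : ∀ x : X, {y | E x y}.Infinite) :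
    ∃ f : X → ℝ≥0∞, Measurable f ∧ (∀ x, f x ≠ 0) ∧ (∀ x, f x ≠ ⊤) ∧
      ∀ σ : Measure X, Inv T σ → ∫⁻ x, f x ∂σ ≠ ⊤ → σ univ = 0 := by
  classical
  let c : X → ℝ := embeddingReal X
  have hc : Measurable c := (measurableEmbedding_embeddingReal X).measurable
  have ci : Function.Injective c := (measurableEmbedding_embeddingReal X).injective
  have hsymm : ∀ x y, E x y → E y x := fun x y h => hE.1.symm h
  let t : ℕ → X → ℝ≥0∞ := fun k => (dying T c k).indicator (mass T c k)
  have mt : ∀ k, Measurable (t k) := fun k =>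
    (measurable_mass hc k).indicator (measurable_alive hc k).2
  have mts : Measurable (fun x => ∑' k, t k x) := Measurable.tsum mt
  have hdisj : ∀ k l x, k < l → x ∈ dying T c k → x ∉ dying T c l := by
    intro k l x hkl hk hl
    have := alive_anti (Nat.succ_le_of_lt hkl) hl.1
    rw [Nat.succ_eq_add_one, alive_succ] at this
    exact this.2 hk
  refine ⟨fun x => 1 + ∑' k, t k x, measurable_const.add mts, by simp, fun x => ?_, ?_⟩
  · refine ENNReal.add_ne_top.2 ⟨by simp, ?_⟩
    by_cases hx : ∃ k, x ∈ dying T c k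
    · obtain ⟨k, hk⟩ := hx
      rw [tsum_eq_single k]
      · simp [t, hk, mass_ne_top]
      · intro l hl
        have : x ∉ dying T c l := by
          intro h
          rcases lt_or_gt_of_ne hl with h' | h'
          · exact hdisj l k x h' h hk
          · exact hdisj k l x h' hk h
        simp [t, this]
    · push Not at hx
      simp [t, hx]
  intro σ hσ hfin
  rw [lintegral_add_left measurable_const] at hfin
  obtain ⟨hfin1, hfin2⟩ := ENNReal.add_ne_top.1 hfin
  simp only [lintegral_const, one_mul] at hfin1
  rw [lintegral_tsum fun k => (mt k).aemeasurable] at hfin2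
  let Z : Set X := ⋂ k, alive T c k
  have mZ : MeasurableSet Z := MeasurableSet.iInter fun k => (measurable_alive hc k).1
  have hZ : ∀ x ∈ Z, ∀ y ∈ Z, E x y → x = y := by
    intro x hx y hy hxy
    by_contra hne
    obtain ⟨k, hk⟩ := (hT.gen x y).1 hxy
    have hk' : T k y = x := by rw [← hk, hT.invol]
    have nd : ∀ z ∈ Z, z ∉ dying T c k := by
      intro z hz hd
      have := mem_iInter.1 hz (k + 1)
      rw [alive_succ] at this
      exact this.2 hd
    rcases lt_or_gt_of_ne (fun h => hne (ci h) : c x ≠ c y) with h | h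
    · exact nd y hy ⟨mem_iInter.1 hy k, by rw [hk']; exact mem_iInter.1 hx k, by rwa [hk']⟩
    · exact nd x hx ⟨mem_iInter.1 hx k, by rw [hk]; exact mem_iInter.1 hy k, by rwa [hk]⟩
  have hZ0 : σ Z = 0 := by
    let W : Set (X × X) := {q | E q.1 q.2} ∩ Prod.fst ⁻¹' Z
    have mW : MeasurableSet W := hE.2.1.inter (measurable_fst mZ)
    let h : X → X → ℝ≥0∞ := fun x y => W.indicator (fun _ => 1) (x, y)
    have mh : Measurable (Function.uncurry h) := measurable_const.indicator mW
    have hm := hT.mtp hsymm hσ mh (by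
      intro x y hxy
      exact indicator_of_notMem (fun hh => hxy hh.1) _)
    have h1 : ∀ x, Z.indicator (fun _ => (⊤ : ℝ≥0∞)) x ≤ ∑' y, h x y := by
      intro x
      by_cases hx : x ∈ Z
      · have : ∑' y, h x y = ∑' y : {y | E x y}, (1 : ℝ≥0∞) := by
          rw [tsum_subtype {y | E x y} (fun _ => (1 : ℝ≥0∞))]
          refine tsum_congr fun y => ?_
          by_cases hy : E x y <;> simp [h, W, indicator, hx, hy]
        rw [this]
        have : Infinite {y | E x y} := (haper x).to_subtype
        rw [ENNReal.tsum_const_eq_top_of_ne_zero one_ne_zero]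
        exact le_top
      · simp [hx]
    have h2 : ∀ x, ∑' y, h y x ≤ 1 := by
      intro x
      by_cases hx : ∃ z ∈ Z, E z x
      · obtain ⟨z, hz, hzx⟩ := hx
        rw [tsum_eq_single z]
        · exact indicator_le_self' (by simp) _
        · intro y hy
          refine indicator_of_notMem (fun hh => hy ?_) _
          exact hZ y hh.2 z hz (hE.1.trans hh.1 (hsymm _ _ hzx))
      · have : ∀ y, h y x = 0 := fun y =>
          indicator_of_notMem (fun hh => hx ⟨y, hh.2, hh.1⟩) _
        simp [this]
    have : ⊤ * σ Z ≤ σ univ := by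
      calc ⊤ * σ Z = ∫⁻ x, Z.indicator (fun _ => (⊤ : ℝ≥0∞)) x ∂σ := by
            rw [lintegral_indicator_const mZ]
        _ ≤ ∫⁻ x, ∑' y, h x y ∂σ := lintegral_mono h1
        _ = ∫⁻ x, ∑' y, h y x ∂σ := hm
        _ ≤ ∫⁻ x, 1 ∂σ := lintegral_mono h2
        _ = σ univ := by simp
    by_contra hne
    rw [ENNReal.top_mul hne] at this
    exact hfin1 (top_le_iff.1 this)
  have tail : ∀ N, σ univ ≤ ∑' k, ∫⁻ x, t (k + N) x ∂σ := by
    intro N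
    rw [← hT.conserve hc hσ N, ← lintegral_tsum fun k => (mt _).aemeasurable]
    refine lintegral_mono_ae ?_
    have : ∀ᵐ x ∂σ, x ∉ Z := measure_eq_zero_iff_ae_notMem.1 hZ0
    filter_upwards [this] with x hx
    by_cases hxN : x ∈ alive T c N
    · have hex : ∃ k, x ∉ alive T c (k + N) := by
        by_contra hh
        push Not at hh
        apply hx
        refine mem_iInter.2 fun k => ?_
        exact alive_anti (Nat.le_add_right k N) (hh k)
      obtain ⟨k, hk⟩ : ∃ k, x ∈ dying T c (k + N) := by
        have h0 : Nat.find hex ≠ 0 := by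
          intro h0
          have := Nat.find_spec hex
          rw [h0, zero_add] at this
          exact this hxN
        obtain ⟨k, hk⟩ := Nat.exists_eq_succ_of_ne_zero h0
        have h1 : x ∈ alive T c (k + N) := by
          by_contra hh
          exact Nat.find_min hex (by omega : k < Nat.find hex) hh
        have h2 := Nat.find_spec hex
        rw [hk, Nat.succ_eq_add_one, show k + 1 + N = k + N + 1 by ring, alive_succ] at h2
        refine ⟨k, ?_⟩
        by_contra hh
        exact h2 ⟨h1, hh⟩
      calc (alive T c N).indicator (mass T c N) x = mass T c N x := indicator_of_mem hxN _
        _ ≤ mass T c (k + N) x := mass_mono x (Nat.le_add_left N k)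
        _ = t (k + N) x := (indicator_of_mem hk _).symm
        _ ≤ _ := ENNReal.le_tsum k
    · rw [indicator_of_notMem hxN]; exact bot_le
  have hlim := ENNReal.tendsto_sum_nat_add (fun k => ∫⁻ x, t k x ∂σ) hfin2
  exact le_antisymm (ge_of_tendsto' hlim tail) bot_le
end MT

section Final
variable [MeasurableSpace X] {E : X → X → Prop} {T : ℕ → X ≃ᵐ X}

/-- The graph of a Borel map on the quotient is Borel. -/
theorem FM.measurableSet_graph [StandardBorelSpace X] (hT : FM E T) {F : X → X → Prop}
    (hF : Equivalence F) (hFin : IsFinSubequiv E F)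
    (φ : Quotient (Setoid.mk F hF) → Quotient (Setoid.mk F hF)) (hφ : Measurable φ) :
    MeasurableSet {p : X × X |
      φ (Quotient.mk (Setoid.mk F hF) p.1) = Quotient.mk (Setoid.mk F hF) p.2} := by
  let _ := upgradeStandardBorel X
  let B := TopologicalSpace.countableBasis X
  have : Countable B := (TopologicalSpace.countable_countableBasis X).to_subtype
  let S : B → X → Prop := fun V x => ∃ z, F x z ∧ z ∈ V.1
  have hS : ∀ V, Measurable (S V) := by
    intro V
    rw [← measurableSet_setOfPred]
    have e : {x | S V x} = ⋃ k, {x | F x (T k x)} ∩ (T k) ⁻¹' V.1 := by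
      ext x
      simp only [S, mem_ofPred_eq, mem_iUnion, mem_inter_iff, mem_preimage]
      constructor
      · rintro ⟨z, h1, h2⟩
        obtain ⟨k, rfl⟩ := (hT.gen x z).1 (hFin.2.2.1 h1)
        exact ⟨k, h1, h2⟩
      · rintro ⟨k, h1, h2⟩
        exact ⟨_, h1, h2⟩
    rw [e]
    refine MeasurableSet.iUnion fun k => MeasurableSet.inter ?_ ?_
    · exact (measurable_id.prodMk (T k).measurable) hFin.2.1
    · exact (T k).measurable
        ((TopologicalSpace.isOpen_of_mem_countableBasis V.2).measurableSet)
  have hSF : ∀ x y, F x y → ∀ V, S V x = S V y := by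
    intro x y hxy V
    apply propext
    constructor
    · rintro ⟨z, h1, h2⟩; exact ⟨z, hF.trans (hF.symm hxy) h1, h2⟩
    · rintro ⟨z, h1, h2⟩; exact ⟨z, hF.trans hxy h1, h2⟩
  have hFS : ∀ x y, (∀ V, S V x ↔ S V y) → F x y := by
    intro x y hV
    by_contra hc
    have hopen : IsOpen ({z | F y z}ᶜ) := (hFin.2.2.2 y).isClosed.isOpen_compl
    have hx : x ∈ {z | F y z}ᶜ := fun h => hc (hF.symm h)
    obtain ⟨V, hVB, hxV, hVU⟩ :=
      (TopologicalSpace.isBasis_countableBasis X).exists_subset_of_mem_open hx hopen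
    obtain ⟨z, h1, h2⟩ := (hV ⟨V, hVB⟩).1 ⟨x, hF.refl x, hxV⟩
    exact hVU h2 h1
  let Q : B → Quotient (Setoid.mk F hF) → Prop := fun V => Quotient.lift (S V)
    (fun a b hab => hSF a b hab V)
  have hQ : ∀ V, Measurable (Q V) := fun V => measurable_from_quotient.2 (hS V)
  have hmk : Measurable (Quotient.mk (Setoid.mk F hF)) := measurable_quotient_mk''
  have e : {p : X × X |
      φ (Quotient.mk (Setoid.mk F hF) p.1) = Quotient.mk (Setoid.mk F hF) p.2}
      = ⋂ V : B, {p : X × X | Q V (φ (Quotient.mk (Setoid.mk F hF) p.1)) ↔ S V p.2} := by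
    ext ⟨x, y⟩
    simp only [mem_ofPred_eq, mem_iInter]
    constructor
    · intro h V
      rw [h]
      exact Iff.rfl
    · intro h
      generalize φ (Quotient.mk (Setoid.mk F hF) x) = q at h
      induction q using Quotient.inductionOn with
      | _ a => exact Quotient.sound (hFS a y h)
  rw [e]
  refine MeasurableSet.iInter fun V => measurableSet_setOfPred.2 ?_
  exact (((hQ V).comp hφ).comp (hmk.comp measurable_fst)).iff ((hS V).comp measurable_snd)

theorem tsum_indicator_ne_top {S : Set X} (hS : S.Finite) {g : X → ℝ≥0∞} (hg : ∀ x, g x ≠ ⊤) :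
    ∑' y, S.indicator g y ≠ ⊤ := by
  rw [tsum_eq_sum (s := hS.toFinset)]
  · refine ENNReal.sum_ne_top.2 fun y _ => ?_
    by_cases hy : y ∈ S <;> simp [hy, hg]
  · intro y hy
    exact indicator_of_notMem (by simpa using hy) _

theorem eSize_eq {ρ : X → X → ℝ} {f : X → ℝ≥0∞}
    (hρ : ∀ x y, E x y → ENNReal.ofReal (ρ x y) = f x / f y) (Y : Set X) (z : X)
    (hY : ∀ y ∈ Y, E y z) : eSize ρ Y z = (∑' y, Y.indicator f y) / f z := by
  unfold eSize
  rw [← tsum_subtype Y f, div_eq_mul_inv, ← ENNReal.tsum_mul_right]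
  refine tsum_congr fun y => ?_
  rw [hρ _ _ (hY y y.2), div_eq_mul_inv]

/-- a bounded strictly increasing function -/
noncomputable def theta (a : ℝ≥0∞) : ℝ≥0∞ := (1 + a⁻¹)⁻¹

theorem theta_strictMono : StrictMono theta := by
  intro a b hab
  unfold theta
  rw [ENNReal.inv_lt_inv]
  exact ENNReal.add_lt_add_left one_ne_top (ENNReal.inv_lt_inv.2 hab)

theorem theta_le_one (a : ℝ≥0∞) : theta a ≤ 1 := by
  unfold theta
  rw [ENNReal.inv_le_one]
  exact le_self_add

theorem theta_ne_zero {a : ℝ≥0∞} (ha : a ≠ 0) : theta a ≠ 0 := by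
  unfold theta
  simp [ha]

theorem measurable_theta : Measurable theta := by
  unfold theta
  fun_prop

theorem FM.no_compression [StandardBorelSpace X] (hT : FM E T) (hE : Equivalence E)
    {ρ : X → X → ℝ} {f : X → ℝ≥0∞} (hf : Measurable f) (hf0 : ∀ x, f x ≠ 0) (hft : ∀ x, f x ≠ ⊤)
    (hρ : ∀ x y, E x y → ENNReal.ofReal (ρ x y) = f x / f y)
    {μ : Measure X} [IsProbabilityMeasure μ] (hμ : Inv T μ)
    {F P : X → X → Prop} (hF : Equivalence F) (hFin : IsFinSubequiv E F)
    (hPm : MeasurableSet {p : X × X | P p.1 p.2}) (hPE : ∀ x y, P x y → E x y)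
    (hPt : ∀ x, ∃ y, P x y) (hPl : ∀ x y z, P x y → (P x z ↔ F y z))
    (hPr : ∀ x y z, P x z → (P y z ↔ F x y))
    (h1 : ∀ x, relSize ρ {y | P y x} {y | F y x} x ≤ 1)
    (h2 : ∀ x, ∃ y, E x y ∧ relSize ρ {z | P z y} {z | F z y} y < 1) : False := by
  have hsymm : ∀ x y, E x y → E y x := fun x y h => hE.symm h
  let n : X → ℝ≥0∞ := fun x => ∑' y, {y | F x y}.indicator (fun _ => 1) y
  let w : X → ℝ≥0∞ := fun x => ∑' y, {y | F x y}.indicator f y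
  have hcl : ∀ x y, F x y → {z | F x z} = {z | F y z} := by
    intro x y h
    ext z
    exact ⟨fun h' => hF.trans (hF.symm h) h', fun h' => hF.trans h h'⟩
  have hnF : ∀ x y, F x y → n x = n y := fun x y h => by simp only [n, hcl x y h]
  have hwF : ∀ x y, F x y → w x = w y := fun x y h => by simp only [w, hcl x y h]
  have hsw : ∀ x, {y | F y x} = {y | F x y} := fun x => by
    ext y; exact ⟨fun h => hF.symm h, fun h => hF.symm h⟩
  have hn0 : ∀ x, n x ≠ 0 := by
    intro x h
    have := ENNReal.tsum_eq_zero.1 h x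
    simp [hF.refl x] at this
  have hw0 : ∀ x, w x ≠ 0 := by
    intro x h
    have := ENNReal.tsum_eq_zero.1 h x
    simp [hF.refl x, hf0] at this
  have hnt : ∀ x, n x ≠ ⊤ := fun x => tsum_indicator_ne_top (hFin.2.2.2 x) (by simp)
  have hwt : ∀ x, w x ≠ ⊤ := fun x => tsum_indicator_ne_top (hFin.2.2.2 x) hft
  have hwm : Measurable w := by
    refine hT.measurable_tsum (h := fun x y => {y | F x y}.indicator f y) ?_ ?_
    · exact (hf.comp measurable_snd).indicator hFin.2.1
    · intro x y h
      exact indicator_of_notMem (fun h' => h (hFin.2.2.1 h')) _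
  have hnm : Measurable n := by
    refine hT.measurable_tsum (h := fun x y => {y | F x y}.indicator (fun _ => 1) y) ?_ ?_
    · exact (measurable_const (a := (1 : ℝ≥0∞))).indicator hFin.2.1
    · intro x y h
      exact indicator_of_notMem (fun h' => h (hFin.2.2.1 h')) _
  have hsum : ∀ (x : X) (c : ℝ≥0∞) (g : X → ℝ≥0∞),
      (∀ y, F x y → g y = c * (n x)⁻¹) → (∀ y, ¬ F x y → g y = 0) → ∑' y, g y = c := by
    intro x c g hg hg'
    have : ∀ y, g y = (c * (n x)⁻¹) * {y | F x y}.indicator (fun _ => 1) y := by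
      intro y
      by_cases h : F x y
      · simp [hg y h, h]
      · simp [hg' y h, h]
    rw [tsum_congr this, ENNReal.tsum_mul_left]
    change c * (n x)⁻¹ * n x = c
    rw [mul_assoc, ENNReal.inv_mul_cancel (hn0 x) (hnt x), mul_one]
  let h : X → X → ℝ≥0∞ := fun x y =>
    {p : X × X | P p.1 p.2}.indicator (fun p => theta (w p.1) * (n p.1)⁻¹ * (n p.2)⁻¹) (x, y)
  have hP : ∀ x y, P x y → h x y = theta (w x) * (n x)⁻¹ * (n y)⁻¹ := fun x y hxy =>
    indicator_of_mem (s := {p : X × X | P p.1 p.2}) (a := (x, y)) hxy _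
  have hnP : ∀ x y, ¬ P x y → h x y = 0 := fun x y hxy =>
    indicator_of_notMem (s := {p : X × X | P p.1 p.2}) (a := (x, y)) hxy _
  have hm : Measurable (Function.uncurry h) := by
    refine Measurable.indicator ?_ hPm
    exact (((measurable_theta.comp hwm).comp measurable_fst).mul
      (hnm.inv.comp measurable_fst)).mul (hnm.inv.comp measurable_snd)
  have hh : ∀ x y, ¬ E x y → h x y = 0 := fun x y hxy => hnP x y fun hc => hxy (hPE _ _ hc)
  have hout : ∀ x, ∑' y, h x y = theta (w x) * (n x)⁻¹ := by
    intro x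
    obtain ⟨y0, hy0⟩ := hPt x
    refine hsum y0 _ _ (fun y hy => ?_) (fun y hy => ?_)
    · rw [hP x y ((hPl x y0 y hy0).2 hy), hnF y0 y hy]
    · exact hnP x y fun hc => hy ((hPl x y0 y hy0).1 hc)
  have hin : ∀ x y0, P y0 x → ∑' y, h y x = theta (w y0) * (n x)⁻¹ := by
    intro x y0 hy0
    refine hsum y0 _ _ (fun y hy => ?_) (fun y hy => ?_)
    · rw [hP y x ((hPr y0 y x hy0).2 hy), hnF y0 y hy, hwF y0 y hy]
      ring
    · exact hnP y x fun hc => hy ((hPr y0 y x hy0).1 hc)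
  have hin0 : ∀ x, (¬ ∃ y0, P y0 x) → ∑' y, h y x = 0 := by
    intro x hx
    exact ENNReal.tsum_eq_zero.2 fun y => hnP y x fun hc => hx ⟨y, hc⟩
  have hrel : ∀ x y0, P y0 x → relSize ρ {y | P y x} {y | F y x} x = w y0 / w x := by
    intro x y0 hy0
    have e1 : {y | P y x} = {y | F y0 y} := by
      ext y; exact hPr y0 y x hy0
    unfold relSize
    rw [eSize_eq hρ {y | P y x} x (fun y hy => hPE _ _ hy),
      eSize_eq hρ {y | F y x} x (fun y hy => hFin.2.2.1 hy), e1, hsw]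
    change w y0 / f x / (w x / f x) = w y0 / w x
    rw [div_eq_mul_inv (w y0), div_eq_mul_inv (w x), ENNReal.mul_div_mul_right _ _
      (ENNReal.inv_ne_zero.2 (hft x)) (ENNReal.inv_ne_top.2 (hf0 x))]
  have hni0 : ∀ x, (n x)⁻¹ ≠ 0 := fun x => ENNReal.inv_ne_zero.2 (hnt x)
  have hnit : ∀ x, (n x)⁻¹ ≠ ⊤ := fun x => ENNReal.inv_ne_top.2 (hn0 x)
  have hle : ∀ x, ∑' y, h y x ≤ ∑' y, h x y := by
    intro x
    by_cases hx : ∃ y0, P y0 x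
    · obtain ⟨y0, hy0⟩ := hx
      have := h1 x
      rw [hrel x y0 hy0, ENNReal.div_le_iff (hw0 x) (hwt x), one_mul] at this
      rw [hout, hin x y0 hy0]
      gcongr
      exact theta_strictMono.monotone this
    · rw [hin0 x hx]; exact bot_le
  have hlt : ∀ x, relSize ρ {y | P y x} {y | F y x} x < 1 → ∑' y, h y x ≠ ∑' y, h x y := by
    intro x hlt heq
    by_cases hx : ∃ y0, P y0 x
    · obtain ⟨y0, hy0⟩ := hx
      rw [hrel x y0 hy0, ENNReal.div_lt_iff (Or.inl (hw0 x)) (Or.inl (hwt x)), one_mul] at hlt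
      rw [hout, hin x y0 hy0] at heq
      have := (ENNReal.mul_left_inj (hni0 x) (hnit x)).1 heq
      exact (theta_strictMono hlt).ne this
    · rw [hin0 x hx, hout] at heq
      exact mul_ne_zero (theta_ne_zero (hw0 x)) (hni0 x) heq.symm
  have hmt := hT.mtp hsymm hμ hm hh
  have hfin : ∫⁻ x, ∑' y, h x y ∂μ ≠ ⊤ := by
    refine ne_top_of_le_ne_top one_ne_top (b := 1) ?_
    calc ∫⁻ x, ∑' y, h x y ∂μ ≤ ∫⁻ _, 1 ∂μ := by
          refine lintegral_mono fun x => ?_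
          rw [hout]
          refine mul_le_one' (theta_le_one _) (ENNReal.inv_le_one.2 ?_)
          have := ENNReal.le_tsum (f := fun y => {y | F x y}.indicator (fun _ => (1 : ℝ≥0∞)) y) x
          simpa [hF.refl x] using this
      _ = 1 := by simp
  have hmo : Measurable fun x => ∑' y, h x y := hT.measurable_tsum hm hh
  have hmi : Measurable fun x => ∑' y, h y x :=
    hT.measurable_tsum (h := fun x y => h y x) (hm.comp measurable_swap)
      (fun x y hxy => hh y x fun hc => hxy (hsymm _ _ hc))
  have hae : (fun x => ∑' y, h y x) =ᵐ[μ] fun x => ∑' y, h x y :=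
    ae_eq_of_ae_le_of_lintegral_le (Filter.Eventually.of_forall hle) (hmt ▸ hfin)
      hmo.aemeasurable hmt.le
  let N : Set X := {x | ∑' y, h y x ≠ ∑' y, h x y}
  have hN : MeasurableSet N := (measurableSet_eq_fun hmi hmo).compl
  have hN0 : μ N = 0 := hae
  have hall : ∀ᵐ x ∂μ, ∀ k, T k x ∉ N := by
    rw [ae_all_iff]
    intro k
    have hNT : Measurable fun x => N.indicator (fun _ => (1 : ℝ≥0∞)) (T k x) :=
      (measurable_const.indicator hN).comp (T k).measurable
    have hq := hμ k (N.indicator fun _ => 1) (measurable_const.indicator hN)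
    rw [lintegral_indicator hN, lintegral_one, Measure.restrict_apply_univ, hN0,
      lintegral_eq_zero_iff hNT] at hq
    filter_upwards [hq] with x hx hc
    simp [hc] at hx
  obtain ⟨x, hx⟩ := hall.exists
  obtain ⟨y, hxy, hy⟩ := h2 x
  obtain ⟨k, rfl⟩ := (hT.gen x y).1 hxy
  exact hx k (hlt _ hy)
end Final

/-- If `E` is aperiodic and admits an `E`-invariant Borel probability measure, then there is
a Borel coboundary `ρ` admitting neither an injective Borel compression of its quotient by a
finite Borel subequivalence relation of `E` nor a `ρ`-invariant Borel probability measure. -/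
theorem stmt12 [MeasurableSpace X] [StandardBorelSpace X]
    (E : X → X → Prop) (hE : IsCBER E)
    (haper : ∀ x : X, {y | E x y}.Infinite)
    (hinv : ∃ μ : Measure X, IsProbabilityMeasure μ ∧ IsInvariant E (fun _ _ => 1) μ) :
    ∃ ρ : X → X → ℝ, IsCocycle E ρ ∧
      (∃ f : X → ℝ, Measurable f ∧ (∀ x, 0 < f x) ∧
        ∀ ⦃x y : X⦄, E x y → ρ x y = f x / f y) ∧
      ¬ (∃ (F : X → X → Prop) (hF : Equivalence F), IsFinSubequiv E F ∧
          ∃ φ : Quotient (Setoid.mk F hF) → Quotient (Setoid.mk F hF),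
            Measurable φ ∧ Function.Injective φ ∧
            QuotCompressionOn E ρ Set.univ (Setoid.mk F hF) φ) ∧
      ¬ (∃ μ : Measure X, IsProbabilityMeasure μ ∧ IsInvariant E ρ μ) := by
  obtain ⟨T, hT1, hT2⟩ := feldmanMoore hE
  have hT : FM E T := ⟨hT1, hT2⟩
  have hsymm : ∀ x y, E x y → E y x := fun x y h => hE.1.symm h
  obtain ⟨f, hf, hf0, hft, hfσ⟩ := hT.exists_density hE haper
  have hpos : ∀ x, 0 < (f x).toReal := fun x => ENNReal.toReal_pos (hf0 x) (hft x)
  have hρ : ∀ x y, E x y →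
      ENNReal.ofReal ((fun x y => (f x).toReal / (f y).toReal) x y) = f x / f y := by
    intro x y _
    simp only
    rw [ENNReal.ofReal_div_of_pos (hpos y), ENNReal.ofReal_toReal (hft x),
      ENNReal.ofReal_toReal (hft y)]
  refine ⟨fun x y => (f x).toReal / (f y).toReal, ⟨?_, ?_, ?_⟩,
    ⟨fun x => (f x).toReal, hf.ennreal_toReal, hpos, fun x y _ => rfl⟩, ?_, ?_⟩
  · exact (hf.ennreal_toReal.comp measurable_fst).div (hf.ennreal_toReal.comp measurable_snd)
  · intro x y _
    exact div_pos (hpos x) (hpos y)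
  · intro x y z _ _
    have := (hpos y).ne'
    have := (hpos z).ne'
    field_simp
  · rintro ⟨F, hF, hFin, φ, hφ, hinj, hc1, hc2, hc3⟩
    obtain ⟨μ, hμ, hμinv⟩ := hinv
    have hI : Inv T μ := by
      have := hT.inv_of_invariant hsymm (f := fun _ => 1) measurable_const (by simp) (by simp)
        (by simp) hμinv
      simpa using this
    refine hT.no_compression hE.1 hf hf0 hft hρ hI hF hFin
      (P := fun x y => φ (Quotient.mk (Setoid.mk F hF) x) = Quotient.mk (Setoid.mk F hF) y)
      (hT.measurableSet_graph hF hFin φ hφ) ?_ ?_ ?_ ?_ ?_ ?_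
    · intro x y hxy
      exact (hc1 (mem_univ x) y hxy).1
    · intro x
      obtain ⟨y, hy⟩ := Quotient.exists_rep (φ (Quotient.mk (Setoid.mk F hF) x))
      exact ⟨y, hy.symm⟩
    · intro x y z hxy
      rw [hxy]
      exact Quotient.eq
    · intro x y z hxz
      rw [← hxz]
      constructor
      · intro h
        exact hF.symm (Quotient.eq.1 (hinj h))
      · intro h
        exact congrArg φ (Quotient.sound (hF.symm h))
    · intro x
      have := hc2 (mem_univ x)
      simpa using this
    · intro x
      obtain ⟨y, -, h1, h2⟩ := hc3 (mem_univ x)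
      exact ⟨y, h1, by simpa using h2⟩
  · rintro ⟨ν, hν, hνinv⟩
    have hI := hT.inv_of_invariant hsymm hf hf0 hft hρ hνinv
    have hfi : Measurable fun x => (f x)⁻¹ := hf.inv
    have h1 : ∫⁻ x, f x ∂(ν.withDensity fun x => (f x)⁻¹) = 1 := by
      rw [lintegral_withDensity_eq_lintegral_mul _ hfi hf]
      have : ∀ x, ((fun x => (f x)⁻¹) * f) x = 1 := fun x =>
        ENNReal.inv_mul_cancel (hf0 x) (hft x)
      rw [lintegral_congr this]
      simp
    have h0 := hfσ _ hI (by rw [h1]; exact one_ne_top)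
    rw [Measure.measure_univ_eq_zero.1 h0, lintegral_zero_measure] at h1
    exact zero_ne_one h1

end CocycleNadkarni
end

section
/- Let X be a standard Borel space, E a countable Borel equivalence relation on X, ρ : E → (0,∞) a Borel cocycle, and μ a ρ-invariant Borel measure on X. Then μ(B) = ∫ |B ∩ [x]_F|^{[x]_F}_ρ dμ(x) for all Borel sets B ⊆ X and all finite Borel subequivalence relations F of E. -/
open MeasureTheory Set ENNReal

namespace CocycleNadkarni

variable {X : Type*} {Γ : Type*}

/-- A sequence of sets is covered by Borel sets with empty intersection. -/
def SeqSep {α : Type*} [MeasurableSpace α] (A : ℕ → Set α) : Prop :=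
  ∃ B : ℕ → Set α, (∀ n, MeasurableSet (B n)) ∧ (∀ n, A n ⊆ B n) ∧ ⋂ n, B n = ∅

lemma SeqSep.step {α : Type*} [MeasurableSpace α] (A : ℕ → Set α) (k : ℕ) (S : ℕ → Set α)
    (hS : A k ⊆ ⋃ v, S v) (h : ∀ v, SeqSep (Function.update A k (S v))) : SeqSep A := by
  choose B hB hA hE using h
  refine ⟨fun n => if n = k then ⋃ v, B v k else ⋂ v, B v n, ?_, ?_, ?_⟩
  · intro n
    by_cases hn : n = k
    · simp only [hn, if_true]; exact MeasurableSet.iUnion fun v => hB v k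
    · simp only [hn, if_false]; exact MeasurableSet.iInter fun v => hB v n
  · intro n
    by_cases hn : n = k
    · subst hn
      simp only [if_true]
      refine hS.trans (iUnion_mono fun v => ?_)
      simpa using hA v n
    · simp only [hn, if_false]
      refine subset_iInter fun v => ?_
      simpa [Function.update_of_ne hn] using hA v n
  · refine eq_empty_of_forall_notMem fun x hx => ?_
    rw [mem_iInter] at hx
    have h1 := hx k
    simp only [if_true, mem_iUnion] at h1
    obtain ⟨v, hv⟩ := h1
    have : x ∈ ⋂ n, B v n := by
      rw [mem_iInter]
      intro n
      by_cases hn : n = k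
      · rw [hn]; exact hv
      · have := hx n
        simp only [hn, if_false, mem_iInter] at this
        exact this v
    rw [hE v] at this
    exact this

/-- Novikov's separation theorem, for continuous images of Baire space. -/
lemma novikov_aux {α : Type*} [TopologicalSpace α] [T2Space α] [MeasurableSpace α]
    [OpensMeasurableSpace α] (f : ℕ → (ℕ → ℕ) → α) (hf : ∀ n, Continuous (f n))
    (h : ⋂ n, range (f n) = ∅) : SeqSep (fun n => range (f n)) := by
  by_contra hns
  let C : (ℕ → ℕ) → ℕ → ℕ → Set (ℕ → ℕ) := fun w m n =>
    {z | ∀ i, Nat.pair n i < m → z i = w (Nat.pair n i)}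
  let P : (ℕ → ℕ) → ℕ → Prop := fun w m => ¬ SeqSep (fun n => f n '' C w m n)
  have step : ∀ m w, P w m → ∃ v, P (Function.update w m v) (m + 1) := by
    intro m w
    simp only [P]
    contrapose!
    intro H
    refine SeqSep.step _ (Nat.unpair m).1
      (fun v => f (Nat.unpair m).1 '' C (Function.update w m v) (m + 1) (Nat.unpair m).1) ?_ ?_
    · rintro _ ⟨z, hz, rfl⟩
      refine mem_iUnion.2 ⟨z (Nat.unpair m).2, z, ?_, rfl⟩
      intro i hi
      by_cases him : Nat.pair (Nat.unpair m).1 i = m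
      · have : i = (Nat.unpair m).2 := by
          have := congrArg (fun q => (Nat.unpair q).2) him
          simpa using this
        subst this
        simp
      · rw [Function.update_of_ne him]
        exact hz i (by omega)
    · intro v
      convert H v using 1
      funext n
      by_cases hn : n = (Nat.unpair m).1
      · subst hn; simp
      · rw [Function.update_of_ne hn]
        congr 1
        ext z
        simp only [C, mem_ofPred_eq]
        refine forall_congr' fun i => ?_
        have him : Nat.pair n i ≠ m := by
          rintro rfl; simp at hn
        rw [Function.update_of_ne him]
        have : Nat.pair n i < m ↔ Nat.pair n i < m + 1 := by omega
        rw [this]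
  choose! v hv using step
  let w : ℕ → (ℕ → ℕ) := fun m => Nat.rec (fun _ => 0) (fun m w => Function.update w m (v m w)) m
  have wsucc : ∀ m, w (m + 1) = Function.update (w m) m (v m (w m)) := fun m => rfl
  have hP : ∀ m, P (w m) m := by
    intro m
    induction m with
    | zero => 
      simpa [P, C, w] using hns
    | succ m ih => rw [wsucc]; exact hv m _ ih
  let w' : ℕ → ℕ := fun i => w (i + 1) i
  have hw : ∀ m i, i < m → w m i = w' i := by
    intro m
    induction m with
    | zero => intro i hi; omega
    | succ m ih =>
      intro i hi
      by_cases him : i = m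
      · subst him; rfl
      · rw [wsucc, Function.update_of_ne him]; exact ih i (by omega)
  have hP' : ∀ m, P w' m := by
    intro m
    have : ∀ n, C w' m n = C (w m) m n := by
      intro n
      ext z
      simp only [C, mem_ofPred_eq]
      refine forall_congr' fun i => ?_
      refine imp_congr_right fun hi => ?_
      rw [hw m _ hi]
    simp only [P, this]
    exact hP m
  let z : ℕ → ℕ → ℕ := fun n i => w' (Nat.pair n i)
  obtain ⟨k, hk⟩ : ∃ k, f k (z k) ≠ f 0 (z 0) := by
    by_contra! hc
    have : f 0 (z 0) ∈ ⋂ n, range (f n) := mem_iInter.2 fun n => ⟨z n, hc n⟩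
    rw [h] at this
    exact this
  have hk0 : k ≠ 0 := by rintro rfl; exact hk rfl
  obtain ⟨U, V, hU, hV, hkU, h0V, hUV⟩ := t2_separation hk
  have key : ∀ n, ∀ U : Set α, IsOpen U → f n (z n) ∈ U →
      ∃ M, ∀ m, M ≤ m → f n '' C w' m n ⊆ U := by
    intro n U hU hz
    have : f n ⁻¹' U ∈ nhds (z n) := (hf n).continuousAt.preimage_mem_nhds (hU.mem_nhds hz)
    obtain ⟨s, ⟨x, N, rfl⟩, hxs, hsU⟩ :=
      (PiNat.isTopologicalBasis_cylinders (fun _ : ℕ => ℕ)).mem_nhds_iff.1 this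
    refine ⟨Nat.pair n N, fun m hm => ?_⟩
    rintro _ ⟨y, hy, rfl⟩
    apply hsU
    rw [PiNat.mem_cylinder_iff] at hxs ⊢
    intro i hi
    rw [← hxs i hi]
    exact hy i ((Nat.pair_lt_pair_right n hi).trans_le hm)
  obtain ⟨M1, hM1⟩ := key k U hU hkU
  obtain ⟨M2, hM2⟩ := key 0 V hV h0V
  apply hP' (max M1 M2)
  refine ⟨fun n => if n = k then U else if n = 0 then V else univ, ?_, ?_, ?_⟩
  · intro n
    dsimp only
    split_ifs
    exacts [hU.measurableSet, hV.measurableSet, MeasurableSet.univ]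
  · intro n
    dsimp only
    split_ifs with h1 h2
    · subst h1; exact hM1 _ (le_max_left _ _)
    · subst h2; exact hM2 _ (le_max_right _ _)
    · exact subset_univ _
  · refine eq_empty_of_forall_notMem fun x hx => ?_
    rw [mem_iInter] at hx
    have h1 := hx k
    have h2 := hx 0
    simp only [if_true] at h1
    simp only [hk0.symm, if_true, if_false] at h2
    exact disjoint_left.1 hUV h1 h2

/-- Novikov's separation theorem. -/
lemma novikov {α : Type*} [TopologicalSpace α] [T2Space α] [MeasurableSpace α]
    [OpensMeasurableSpace α] (A : ℕ → Set α) (hA : ∀ n, AnalyticSet (A n))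
    (h : ⋂ n, A n = ∅) : SeqSep A := by
  by_cases he : ∃ n, A n = ∅
  · obtain ⟨k, hk⟩ := he
    refine ⟨fun n => if n = k then ∅ else univ, ?_, ?_, ?_⟩
    · intro n; dsimp only; split_ifs <;> simp
    · intro n; dsimp only; split_ifs with h1
      · rw [h1, hk]
      · exact subset_univ _
    · refine eq_empty_of_forall_notMem fun x hx => ?_
      have := mem_iInter.1 hx k
      simp at this
  · push Not at he
    have : ∀ n, ∃ f : (ℕ → ℕ) → α, Continuous f ∧ range f = A n := by
      intro n
      have := hA n
      rw [AnalyticSet] at this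
      exact this.resolve_left (he n).ne_empty
    choose f hf hr using this
    have hAe : A = fun n => range (f n) := by funext n; rw [hr]
    rw [hAe] at h ⊢
    exact novikov_aux f hf h

lemma exists_enum (e : X → ℝ) (he : Function.Injective e) (S : Set X) (hS : S.Finite) :
    ∃ t : Fin S.ncard → X, StrictMono (e ∘ t) ∧ range t = S := by
  classical
  let := LinearOrder.lift' e he
  have hc : hS.toFinset.card = S.ncard := (Set.ncard_eq_toFinset_card S hS).symm
  refine ⟨hS.toFinset.orderEmbOfFin hc, ?_, ?_⟩
  · intro i j hij
    exact (hS.toFinset.orderEmbOfFin hc).strictMono hij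
  · rw [Finset.range_orderEmbOfFin]; simp

lemma range_of_enum {n : ℕ} (e : X → ℝ) (S : Set X) (hS : S.Finite)
    (hn : S.ncard ≤ n) (t : Fin n → X) (ht : StrictMono (e ∘ t)) (htS : ∀ i, t i ∈ S) :
    range t = S := by
  refine Set.eq_of_subset_of_ncard_le (range_subset_iff.2 htS) ?_ hS
  have hinj : Function.Injective t := Function.Injective.of_comp ht.injective
  have := Set.ncard_image_of_injective univ hinj
  rw [image_univ, Set.ncard_univ] at this
  simpa [this] using hn

lemma enum_unique {n : ℕ} (e : X → ℝ) (he : Function.Injective e) (S : Set X) (hS : S.Finite)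
    (hn : S.ncard ≤ n) (t t' : Fin n → X) (ht : StrictMono (e ∘ t)) (htS : ∀ i, t i ∈ S)
    (ht' : StrictMono (e ∘ t')) (htS' : ∀ i, t' i ∈ S) : t = t' := by
  have h1 := range_of_enum e S hS hn t ht htS
  have h2 := range_of_enum e S hS hn t' ht' htS'
  have : e ∘ t = e ∘ t' := by
    rw [← StrictMono.range_inj ht ht', range_comp, range_comp, h1, h2]
  funext i
  exact he (congrFun this i)

/-- pairs `(x, t)` with `t` an increasing tuple in the class of `x` -/
def tup (F : X → X → Prop) (e : X → ℝ) (n : ℕ) : Set (X × (Fin n → X)) :=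
  {p | StrictMono (e ∘ p.2) ∧ ∀ i, F p.1 (p.2 i)}

lemma measurableSet_tup [MeasurableSpace X] (F : X → X → Prop)
    (hF : MeasurableSet {p : X × X | F p.1 p.2}) (e : X → ℝ) (he : Measurable e) (n : ℕ) :
    MeasurableSet (tup F e n) := by
  have : tup F e n = (⋂ (i : Fin n) (j : Fin n) (_ : i < j),
      {p : X × (Fin n → X) | e (p.2 i) < e (p.2 j)}) ∩
      ⋂ i : Fin n, (fun p : X × (Fin n → X) => (p.1, p.2 i)) ⁻¹' {p : X × X | F p.1 p.2} := by
    ext p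
    simp [tup, StrictMono]
  rw [this]
  refine MeasurableSet.inter ?_ ?_
  · refine MeasurableSet.iInter fun i => MeasurableSet.iInter fun j =>
      MeasurableSet.iInter fun _ => measurableSet_lt (by fun_prop) (by fun_prop)
  · refine MeasurableSet.iInter fun i => ?_
    exact (by fun_prop : Measurable (fun p : X × (Fin n → X) => (p.1, p.2 i))) hF

lemma fst_tup (F : X → X → Prop) (hfin : ∀ x : X, {y | F x y}.Finite)
    (e : X → ℝ) (he : Function.Injective e) (n : ℕ) :
    Prod.fst '' tup F e n = {x | n ≤ {y | F x y}.ncard} := by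
  ext x
  constructor
  · rintro ⟨⟨x, t⟩, ⟨h1, h2⟩, rfl⟩
    have hinj : Function.Injective t := Function.Injective.of_comp h1.injective
    have h3 := Set.ncard_image_of_injective univ hinj
    rw [image_univ, Set.ncard_univ, Nat.card_fin] at h3
    have : range t ⊆ {y | F x y} := range_subset_iff.2 h2
    have := Set.ncard_le_ncard this (hfin x)
    simpa [h3] using this
  · intro hx
    obtain ⟨t, ht, hr⟩ := exists_enum e he _ (hfin x)
    refine ⟨(x, t ∘ Fin.castLE hx), ⟨?_, ?_⟩, rfl⟩
    · exact ht.comp (Fin.strictMono_castLE hx)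
    · intro i
      have : t (Fin.castLE hx i) ∈ range t := mem_range_self _
      rw [hr] at this
      exact this

lemma measurable_ncard [MeasurableSpace X] [StandardBorelSpace X] (F : X → X → Prop)
    (hF : MeasurableSet {p : X × X | F p.1 p.2}) (hfin : ∀ x : X, {y | F x y}.Finite) (n : ℕ) :
    MeasurableSet {x | n ≤ {y | F x y}.ncard} := by
  obtain ⟨e, hemb⟩ := exists_measurableEmbedding_real X
  have he := hemb.injective
  have hm := hemb.measurable
  let := upgradeStandardBorel X
  obtain ⟨B, hB, hAB, hBe⟩ := novikov (fun n => {x | n ≤ {y | F x y}.ncard})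
    (fun n => by
      rw [← fst_tup F hfin e he n]
      exact (measurableSet_tup F hF e hm n).analyticSet_image measurable_fst)
    (by
      refine eq_empty_of_forall_notMem fun x hx => ?_
      have := mem_iInter.1 hx ({y | F x y}.ncard + 1)
      simp at this)
  have key : ∀ m j n, n + j = m → MeasurableSet ({x | n ≤ {y | F x y}.ncard} \ B m) := by
    intro m j
    induction j with
    | zero =>
      rintro n rfl
      have h0 : {x | n ≤ {y | F x y}.ncard} \ B (n + 0) = ∅ := sdiff_eq_empty.2 (hAB _)
      rw [h0]
      exact MeasurableSet.empty
    | succ j ih =>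
      intro n hn
      have h1 := ih (n + 1) (by omega)
      have h2 : MeasurableSet (Prod.fst '' (tup F e n ∩ Prod.fst ⁻¹'
          ((B m)ᶜ \ ({x | n + 1 ≤ {y | F x y}.ncard} \ B m)))) := by
        refine MeasurableSet.image_of_measurable_injOn ?_ measurable_fst ?_
        · exact (measurableSet_tup F hF e hm n).inter
            (measurable_fst ((hB m).compl.diff h1))
        · rintro ⟨x, t⟩ ⟨⟨h1, h2⟩, h3, h4⟩ ⟨x', t'⟩ ⟨⟨h1', h2'⟩, -⟩ hxx
          simp only at hxx
          subst hxx
          have h5 : {y | F x y}.ncard ≤ n := by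
            by_contra hc
            exact h4 ⟨by simp only [mem_ofPred_eq]; omega, h3⟩
          rw [enum_unique e he _ (hfin x) h5 t t' h1 h2 h1' h2']
      convert h1.union h2 using 1
      rw [image_inter_preimage, fst_tup F hfin e he]
      ext x
      simp only [mem_sdiff, mem_ofPred_eq, mem_union, mem_inter_iff, mem_compl_iff]
      by_cases hx : x ∈ B m
      · simp [hx]
      · simp only [hx, not_false_eq_true, and_true, true_and]
        omega
  have : {x | n ≤ {y | F x y}.ncard} = ⋃ j, ({x | n ≤ {y | F x y}.ncard} \ B (n + j)) := by
    ext x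
    simp only [mem_iUnion, mem_sdiff]
    constructor
    · intro hx
      have hx' : x ∉ ⋂ n, B n := by rw [hBe]; exact notMem_empty x
      rw [mem_iInter] at hx'
      push Not at hx'
      obtain ⟨m, hm'⟩ := hx'
      have hnm : n ≤ m := by
        by_contra hc
        refine hm' (hAB m ?_)
        simp only [mem_ofPred_eq] at hx ⊢
        omega
      refine ⟨m - n, hx, ?_⟩
      rwa [Nat.add_sub_cancel' hnm]
    · rintro ⟨_, h, _⟩
      exact h
  rw [this]
  exact MeasurableSet.iUnion fun j => key _ j n rfl

/-- On the Borel set of points whose class has `k+1` elements, a Borel invariant enumeration. -/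
lemma exists_borel_enum [MeasurableSpace X] [StandardBorelSpace X] (F : X → X → Prop)
    (hEq : Equivalence F)
    (hF : MeasurableSet {p : X × X | F p.1 p.2}) (hfin : ∀ x : X, {y | F x y}.Finite) (k : ℕ) :
    ∃ en : X → Fin k → X, Measurable en ∧
      ∀ x, {y | F x y}.ncard = k → Function.Injective (en x) ∧ range (en x) = {y | F x y} ∧
        ∀ y, F x y → en y = en x := by
  classical
  obtain ⟨e, hemb⟩ := exists_measurableEmbedding_real X
  have he := hemb.injective
  have hm := hemb.measurable
  have hmeas : MeasurableSet {x | {y | F x y}.ncard = k} := by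
    have : {x | {y | F x y}.ncard = k} =
        {x | k ≤ {y | F x y}.ncard} \ {x | k + 1 ≤ {y | F x y}.ncard} := by
      ext x; simp only [mem_sdiff, mem_ofPred_eq]; omega
    rw [this]
    exact (measurable_ncard F hF hfin k).diff (measurable_ncard F hF hfin (k + 1))
  have ex : ∀ x, ∃ t : Fin k → X, ({y | F x y}.ncard = k →
      StrictMono (e ∘ t) ∧ range t = {y | F x y}) ∧ (¬ {y | F x y}.ncard = k → t = fun _ => x) := by
    intro x
    by_cases h : {y | F x y}.ncard = k
    · subst h
      obtain ⟨t, ht⟩ := exists_enum e he _ (hfin x)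
      exact ⟨t, fun _ => ht, fun h => absurd rfl h⟩
    · exact ⟨fun _ => x, fun h' => absurd h' h, fun _ => rfl⟩
  choose en h1 h2 using ex
  have hin : ∀ x, {y | F x y}.ncard = k → ∀ i, F x (en x i) := by
    intro x hx i
    have : en x i ∈ range (en x) := mem_range_self _
    rw [(h1 x hx).2] at this
    exact this
  refine ⟨en, ?_, ?_⟩
  · intro C hC
    have : en ⁻¹' C = (Prod.fst '' (tup F e k ∩
        {p | {y | F p.1 y}.ncard = k ∧ p.2 ∈ C})) ∪
        ({x | {y | F x y}.ncard = k}ᶜ ∩ (fun x : X => (fun _ : Fin k => x)) ⁻¹' C) := by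
      ext x
      simp only [mem_preimage, mem_union, mem_image, mem_inter_iff, mem_compl_iff, mem_ofPred_eq]
      by_cases hx : {y | F x y}.ncard = k
      · simp only [hx, not_true_eq_false, false_and, or_false]
        constructor
        · intro h
          exact ⟨(x, en x), ⟨⟨(h1 x hx).1, hin x hx⟩, hx, h⟩, rfl⟩
        · rintro ⟨⟨x', t⟩, ⟨⟨h3, h4⟩, -, h5⟩, rfl⟩
          rwa [enum_unique e he _ (hfin x') hx.le (en x') t (h1 x' hx).1 (hin x' hx) h3 h4]
      · rw [h2 x hx]
        simp only [hx, not_false_eq_true, true_and]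
        constructor
        · exact fun h => Or.inr h
        · rintro (⟨⟨x', t⟩, ⟨-, h, -⟩, rfl⟩ | h)
          · exact absurd h hx
          · exact h
    rw [this]
    refine MeasurableSet.union ?_ (hmeas.compl.inter ?_)
    · refine MeasurableSet.image_of_measurable_injOn ?_ measurable_fst ?_
      · exact (measurableSet_tup F hF e hm k).inter
          ((measurable_fst hmeas).inter (measurable_snd hC))
      · rintro ⟨x, t⟩ ⟨⟨h1, h2⟩, h3, h4⟩ ⟨x', t'⟩ ⟨⟨h1', h2'⟩, -⟩ hxx
        simp only at hxx
        subst hxx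
        rw [enum_unique e he _ (hfin x) (le_of_eq h3) t t' h1 h2 h1' h2']
    · exact (by fun_prop : Measurable (fun x : X => (fun _ : Fin k => x))) hC
  · intro x hx
    refine ⟨Function.Injective.of_comp (h1 x hx).1.injective, (h1 x hx).2, ?_⟩
    intro y hxy
    have hcl : {z | F x z} = {z | F y z} := by
      ext z
      exact ⟨fun h => hEq.trans (hEq.symm hxy) h, fun h => hEq.trans hxy h⟩
    have hy : {z | F y z}.ncard = k := by rw [← hcl]; exact hx
    refine enum_unique e he {z | F x z} (hfin x) hx.le _ _ (h1 y hy).1 ?_ (h1 x hx).1 (hin x hx)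
    intro i
    rw [hcl]
    exact hin y hy i

/-- A Borel family of automorphisms, cyclically permuting the classes of size `k + 1`. -/
lemma exists_rot [MeasurableSpace X] [StandardBorelSpace X] (F : X → X → Prop)
    (hEq : Equivalence F)
    (hF : MeasurableSet {p : X × X | F p.1 p.2}) (hfin : ∀ x : X, {y | F x y}.Finite) (k : ℕ) :
    ∃ T : Fin (k + 1) → (X ≃ᵐ X), (∀ j x, F x (T j x)) ∧ (∀ j x, (T j).symm x = T (-j) x) ∧
      ∀ x, {y | F x y}.ncard = k + 1 → Function.Injective (fun j => T j x) ∧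
        range (fun j => T j x) = {y | F x y} := by
  classical
  obtain ⟨en, hen, h⟩ := exists_borel_enum F hEq hF hfin (k + 1)
  have hmeas : MeasurableSet {x | {y | F x y}.ncard = k + 1} := by
    have : {x | {y | F x y}.ncard = k + 1} =
        {x | k + 1 ≤ {y | F x y}.ncard} \ {x | k + 1 + 1 ≤ {y | F x y}.ncard} := by
      ext x; simp only [mem_sdiff, mem_ofPred_eq]; omega
    rw [this]
    exact (measurable_ncard F hF hfin _).diff (measurable_ncard F hF hfin _)
  have hidx : ∀ x, ∃ i, {y | F x y}.ncard = k + 1 → en x i = x := by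
    intro x
    by_cases hx : {y | F x y}.ncard = k + 1
    · have : x ∈ range (en x) := by rw [(h x hx).2.1]; exact hEq.refl x
      obtain ⟨i, hi⟩ := this
      exact ⟨i, fun _ => hi⟩
    · exact ⟨0, fun h => absurd h hx⟩
  choose idx hidx using hidx
  let T : Fin (k + 1) → X → X := fun j x =>
    if {y | F x y}.ncard = k + 1 then en x (idx x + j) else x
  have Tpos : ∀ j x, {y | F x y}.ncard = k + 1 → T j x = en x (idx x + j) :=
    fun j x hx => if_pos hx
  have Tneg : ∀ j x, ¬ {y | F x y}.ncard = k + 1 → T j x = x := fun j x hx => if_neg hx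
  have TF : ∀ j x, F x (T j x) := by
    intro j x
    by_cases hx : {y | F x y}.ncard = k + 1
    · rw [Tpos j x hx]
      have : en x (idx x + j) ∈ range (en x) := mem_range_self _
      rw [(h x hx).2.1] at this
      exact this
    · rw [Tneg j x hx]; exact hEq.refl x
  have Tm : ∀ j, Measurable (T j) := by
    intro j C hC
    have : T j ⁻¹' C = ({x | {y | F x y}.ncard = k + 1}ᶜ ∩ C) ∪
        ⋃ i, ({x | {y | F x y}.ncard = k + 1} ∩ ({x | en x i = x} ∩
          (fun x => en x (i + j)) ⁻¹' C)) := by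
      ext x
      simp only [mem_preimage, mem_union, mem_iUnion, mem_inter_iff, mem_compl_iff, mem_ofPred_eq]
      by_cases hx : {y | F x y}.ncard = k + 1
      · rw [Tpos j x hx]
        simp only [hx, not_true_eq_false, false_and, false_or, true_and]
        constructor
        · intro h
          exact ⟨idx x, hidx x hx, h⟩
        · rintro ⟨i, hi, hC⟩
          have : idx x = i := (h x hx).1 ((hidx x hx).trans hi.symm)
          rwa [this]
      · rw [Tneg j x hx]
        simp [hx]
    rw [this]
    refine (hmeas.compl.inter hC).union (MeasurableSet.iUnion fun i => hmeas.inter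
      (MeasurableSet.inter ?_ ?_))
    · exact measurableSet_eq_fun (by fun_prop) measurable_id
    · exact (by fun_prop : Measurable (fun x => en x (i + j))) hC
  have Tinv : ∀ j x, T (-j) (T j x) = x := by
    intro j x
    by_cases hx : {y | F x y}.ncard = k + 1
    · have hcl : {z | F x z} = {z | F (T j x) z} := by
        ext z
        exact ⟨fun h => hEq.trans (hEq.symm (TF j x)) h, fun h => hEq.trans (TF j x) h⟩
      have hy : {z | F (T j x) z}.ncard = k + 1 := by rw [← hcl]; exact hx
      have hee : en (T j x) = en x := (h x hx).2.2 _ (TF j x)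
      have hi : idx (T j x) = idx x + j := by
        apply (h x hx).1
        rw [← Tpos j x hx, ← hee]
        exact hidx _ hy
      rw [Tpos (-j) _ hy, hi, hee, add_neg_cancel_right]
      exact hidx x hx
    · rw [Tneg j x hx, Tneg (-j) x hx]
  refine ⟨fun j => ⟨⟨T j, T (-j), Tinv j, fun x => by simpa using Tinv (-j) x⟩, Tm j, Tm (-j)⟩,
    TF, fun j x => rfl, ?_⟩
  intro x hx
  have hT : (fun j => T j x) = en x ∘ (Equiv.addLeft (idx x)) := by
    funext j; exact Tpos j x hx
  change Function.Injective (fun j => T j x) ∧ range (fun j => T j x) = _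
  rw [hT]
  refine ⟨(h x hx).1.comp (Equiv.injective _), ?_⟩
  rw [EquivLike.range_comp, (h x hx).2.1]

lemma tsum_inter_range {ι : Type*} [Fintype ι] (t : ι → X) (ht : Function.Injective t)
    (B C : Set X) (hC : range t = C) (f : X → ℝ≥0∞) :
    ∑' y : ↥(B ∩ C), f y = ∑ j, B.indicator f (t j) := by
  subst hC
  rw [tsum_subtype (B ∩ range t) f, inter_comm, ← indicator_indicator,
    ← tsum_subtype (range t) (B.indicator f), tsum_range (B.indicator f) ht, tsum_fintype]

lemma lintegral_invariant [MeasurableSpace X] (E : X → X → Prop) (ρ : X → X → ℝ)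
    (hρ : Measurable (fun p : X × X => ρ p.1 p.2)) (μ : Measure X) (hμ : IsInvariant E ρ μ)
    (T : X ≃ᵐ X) (hT : ∀ x, E (T x) x) (f : X → ℝ≥0∞) (hf : Measurable f) :
    ∫⁻ x, ENNReal.ofReal (ρ (T x) x) * f (T x) ∂μ = ∫⁻ x, f x ∂μ := by
  have hd : Measurable (fun x => ENNReal.ofReal (ρ (T x) x)) :=
    (hρ.comp (T.measurable.prodMk measurable_id)).ennreal_ofReal
  have hmap : (μ.withDensity (fun x => ENNReal.ofReal (ρ (T x) x))).map T = μ := by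
    ext B hB
    rw [Measure.map_apply T.measurable hB, withDensity_apply _ (T.measurable hB),
      ← hμ T hT _ (T.measurable hB), image_preimage_eq _ T.surjective]
  conv_rhs => rw [← hmap]
  rw [lintegral_map hf T.measurable]
  exact (lintegral_withDensity_eq_lintegral_mul μ hd (hf.comp T.measurable)).symm

lemma stmt13_aux [MeasurableSpace X] [StandardBorelSpace X]
    (E : X → X → Prop) (hE : IsCBER E)
    (ρ : X → X → ℝ) (hρ : IsCocycle E ρ)
    (μ : Measure X) (hμ : IsInvariant E ρ μ)
    (B : Set X) (hB : MeasurableSet B) (F : X → X → Prop) (hF : IsFinSubequiv E F) (k : ℕ)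
    (hmeas : MeasurableSet {x | {y | F x y}.ncard = k + 1}) :
      μ (B ∩ {x | {y | F x y}.ncard = k + 1}) =
        ∫⁻ x in {x | {y | F x y}.ncard = k + 1},
          relSize ρ (B ∩ {y | F y x}) {y | F y x} x ∂μ := by
  classical
  obtain ⟨hEq, hFm, hFE, hfin⟩ := hF
  obtain ⟨hρm, hρpos, hρc⟩ := hρ
  obtain ⟨T, TF, Tsymm, hT⟩ := exists_rot F hEq hFm hfin k
  set Y : Set X := {x | {y | F x y}.ncard = k + 1} with hY
  let s : X → ℝ≥0∞ := fun x => ∑ j, ENNReal.ofReal (ρ (T j x) x)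
  have hd : ∀ j, Measurable (fun x => ENNReal.ofReal (ρ (T j x) x)) := fun j =>
    (hρm.comp ((T j).measurable.prodMk measurable_id)).ennreal_ofReal
  have hs : Measurable s := Finset.measurable_sum _ fun j _ => hd j
  have hsymm : ∀ x, {y | F y x} = {y | F x y} := fun x => by
    ext y; exact ⟨fun h => hEq.symm h, fun h => hEq.symm h⟩
  have s0 : ∀ x, s x ≠ 0 := by
    intro x h
    have := (Finset.sum_eq_zero_iff.1 h) 0 (Finset.mem_univ _)
    rw [ENNReal.ofReal_eq_zero] at this
    exact absurd this (not_le.2 (hρpos (hFE (hEq.symm (TF 0 x)))))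
  have st : ∀ x, s x ≠ ⊤ := fun x => ENNReal.sum_ne_top.2 fun j _ => ENNReal.ofReal_ne_top
  have hYT : ∀ j x, T j x ∈ Y ↔ x ∈ Y := by
    intro j x
    have hcl : {z | F x z} = {z | F (T j x) z} := by
      ext z
      exact ⟨fun h => hEq.trans (hEq.symm (TF j x)) h, fun h => hEq.trans (TF j x) h⟩
    simp only [hY, mem_ofPred_eq, hcl]
  have esz : ∀ x ∈ Y, eSize ρ {y | F y x} x = s x := by
    intro x hx
    have := tsum_inter_range (fun j => T j x) (hT x hx).1 univ _ (hT x hx).2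
      (fun y => ENNReal.ofReal (ρ y x))
    rw [univ_inter] at this
    rw [eSize, hsymm x, this]
    simp [s]
  have eszB : ∀ x ∈ Y, eSize ρ (B ∩ {y | F y x}) x =
      ∑ j, B.indicator (fun y => ENNReal.ofReal (ρ y x)) (T j x) := by
    intro x hx
    rw [eSize, hsymm x]
    exact tsum_inter_range (fun j => T j x) (hT x hx).1 B _ (hT x hx).2
      (fun y => ENNReal.ofReal (ρ y x))
  -- change of base point
  have sch : ∀ x ∈ Y, ∀ j, s (T j x) = s x * ENNReal.ofReal (ρ x (T j x)) := by
    intro x hx j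
    have hcl : {z | F x z} = {z | F (T j x) z} := by
      ext z
      exact ⟨fun h => hEq.trans (hEq.symm (TF j x)) h, fun h => hEq.trans (TF j x) h⟩
    rw [← esz _ ((hYT j x).2 hx), ← esz x hx, eSize, eSize, hsymm, hsymm, ← hcl,
      ← ENNReal.tsum_mul_right]
    refine tsum_congr fun y => ?_
    have hy : F x y := y.2
    rw [← ENNReal.ofReal_mul (hρpos (hFE (hEq.symm hy))).le,
      ← hρc (hFE (hEq.symm hy)) (hFE (TF j x))]
  let f : Fin (k + 1) → X → ℝ≥0∞ := fun j =>
    (Y ∩ B).indicator (fun y => ENNReal.ofReal (ρ (T (-j) y) y) / s y)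
  have hf : ∀ j, Measurable (f j) := fun j => ((hd (-j)).div hs).indicator (hmeas.inter hB)
  have hinvT : ∀ j x, T (-j) (T j x) = x := by
    intro j x
    rw [← Tsymm]; exact (T j).symm_apply_apply x
  have step1 : ∀ x, Y.indicator (fun x => relSize ρ (B ∩ {y | F y x}) {y | F y x} x) x =
      ∑ j, ENNReal.ofReal (ρ (T j x) x) * f j (T j x) := by
    intro x
    by_cases hx : x ∈ Y
    · rw [indicator_of_mem hx, relSize, esz x hx, eszB x hx, ENNReal.div_eq_inv_mul,
        Finset.mul_sum]
      refine Finset.sum_congr rfl fun j _ => ?_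
      simp only [f]
      by_cases hb : T j x ∈ B
      · rw [indicator_of_mem hb, indicator_of_mem (show T j x ∈ Y ∩ B from ⟨(hYT j x).2 hx, hb⟩), hinvT, sch x hx j]
        have hp : ENNReal.ofReal (ρ x (T j x)) ≠ 0 := by
          rw [Ne, ENNReal.ofReal_eq_zero]
          exact not_le.2 (hρpos (hFE (TF j x)))
        rw [ENNReal.div_eq_inv_mul, ENNReal.mul_inv (Or.inl (s0 x)) (Or.inl (st x)), mul_assoc,
          ENNReal.inv_mul_cancel hp ENNReal.ofReal_ne_top, mul_one, mul_comm]
      · rw [indicator_of_notMem hb, indicator_of_notMem (fun h => hb h.2), mul_zero, mul_zero]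
    · rw [indicator_of_notMem hx, eq_comm]
      refine Finset.sum_eq_zero fun j _ => ?_
      simp only [f]
      rw [indicator_of_notMem (fun h => hx ((hYT j x).1 h.1)), mul_zero]
  have step2 : ∀ x, ∑ j, f j x = (Y ∩ B).indicator 1 x := by
    intro x
    by_cases hx : x ∈ Y ∩ B
    · simp only [f, indicator_of_mem hx]
      simp_rw [div_eq_mul_inv]
      have hneg : ∑ i, ENNReal.ofReal (ρ (T (-i) x) x) = s x :=
        Equiv.sum_comp (Equiv.neg (Fin (k + 1))) (fun j => ENNReal.ofReal (ρ (T j x) x))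
      rw [← Finset.sum_mul, hneg]
      exact ENNReal.mul_inv_cancel (s0 x) (st x)
    · simp only [f, indicator_of_notMem hx, Finset.sum_const_zero]
  rw [← lintegral_indicator hmeas]
  simp_rw [step1]
  rw [lintegral_finsetSum]
  · have : ∀ j, ∫⁻ x, ENNReal.ofReal (ρ (T j x) x) * f j (T j x) ∂μ = ∫⁻ x, f j x ∂μ :=
      fun j => lintegral_invariant E ρ hρm μ hμ (T j) (fun x => hFE (hEq.symm (TF j x))) _ (hf j)
    simp_rw [this]
    rw [← lintegral_finsetSum _ (fun j _ => hf j)]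
    simp_rw [step2]
    rw [lintegral_indicator_one (hmeas.inter hB), inter_comm]
  · exact fun j _ => (hd j).mul ((hf j).comp (T j).measurable)

/-- For a `ρ`-invariant measure `μ`, `μ(B) = ∫ |B ∩ [x]_F|^{[x]_F}_ρ dμ(x)` for all Borel
`B ⊆ X` and finite Borel subequivalence relations `F` of `E`. -/
theorem stmt13 [MeasurableSpace X] [StandardBorelSpace X]
    (E : X → X → Prop) (hE : IsCBER E)
    (ρ : X → X → ℝ) (hρ : IsCocycle E ρ)
    (μ : Measure X) (hμ : IsInvariant E ρ μ) :
    ∀ B : Set X, MeasurableSet B → ∀ F : X → X → Prop, IsFinSubequiv E F →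
      μ B = ∫⁻ x, relSize ρ (B ∩ {y | F y x}) {y | F y x} x ∂μ := by
  intro B hB F hF
  have hfin := hF.2.2.2
  have hFm := hF.2.1
  have hmeas : ∀ k, MeasurableSet {x | {y | F x y}.ncard = k + 1} := by
    intro k
    have : {x | {y | F x y}.ncard = k + 1} =
        {x | k + 1 ≤ {y | F x y}.ncard} \ {x | k + 1 + 1 ≤ {y | F x y}.ncard} := by
      ext x; simp only [mem_sdiff, mem_ofPred_eq]; omega
    rw [this]
    exact (measurable_ncard F hFm hfin _).diff (measurable_ncard F hFm hfin _)
  have hU : ⋃ k, {x | {y | F x y}.ncard = k + 1} = (univ : Set X) := by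
    refine eq_univ_of_forall fun x => mem_iUnion.2 ?_
    have : {y | F x y}.ncard ≠ 0 := by
      rw [Ne, Set.ncard_eq_zero (hfin x)]
      exact Nonempty.ne_empty ⟨x, hF.1.refl x⟩
    exact ⟨{y | F x y}.ncard - 1, by simp only [mem_ofPred_eq]; omega⟩
  have hD : Pairwise (Function.onFun Disjoint fun k => {x | {y | F x y}.ncard = k + 1}) := by
    intro i j hij
    refine disjoint_left.2 fun x hx hx' => hij ?_
    simp only [mem_ofPred_eq] at hx hx'
    omega
  rw [← setLIntegral_univ (μ := μ), ← hU, lintegral_iUnion hmeas hD]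
  have h1 : μ B = ∑' k, μ (B ∩ {x | {y | F x y}.ncard = k + 1}) := by
    rw [← measure_iUnion (fun i j hij => (hD hij).mono inter_subset_right inter_subset_right)
      (fun k => hB.inter (hmeas k)), ← inter_iUnion, hU, inter_univ]
  rw [h1]
  exact tsum_congr fun k => stmt13_aux E hE ρ hρ μ hμ B hB F hF k (hmeas k)

end CocycleNadkarni
end

section
/- Let X be a standard Borel space, E a countable Borel equivalence relation on X, R, S ⊆ E Borel sets, and ρ : E → (0,∞) a Borel cocycle. Then every Borel measure μ that is invariant with respect to the restriction of ρ to R ∪ S is invariant with respect to the restriction of ρ to the composition R ∘ S = {(x,z) : ∃y, x R y and y S z}. -/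
open MeasureTheory Set ENNReal

namespace CocycleNadkarni

variable {X : Type*} {Γ : Type*}

section LN
variable {Z Y : Type*}

/-- countable union of measurable sets on which `f` is injective -/
def LNSmall [MeasurableSpace Z] (f : Z → Y) (B : Set Z) : Prop :=
  ∃ 𝒞 : Set (Set Z), 𝒞.Countable ∧ (∀ C ∈ 𝒞, MeasurableSet C ∧ InjOn f C) ∧ B = ⋃₀ 𝒞

def LNBig [MeasurableSpace Z] (f : Z → Y) {ι : Type*} (U : ι → Set Z) : Prop :=
  ∀ B, LNSmall f B → ∃ x, ∀ i, ∃ z ∈ U i, z ∉ B ∧ f z = x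

theorem LNSmall.measurableSet [MeasurableSpace Z] {f : Z → Y} {B : Set Z} (h : LNSmall f B) :
    MeasurableSet B := by
  obtain ⟨𝒞, hc, h1, rfl⟩ := h
  exact MeasurableSet.sUnion hc fun C hC => (h1 C hC).1

theorem LNSmall.empty [MeasurableSpace Z] (f : Z → Y) : LNSmall f ∅ :=
  ⟨∅, countable_empty, by simp, by simp⟩

theorem LNSmall.of_injOn [MeasurableSpace Z] {f : Z → Y} {C : Set Z} (h : MeasurableSet C)
    (h' : InjOn f C) : LNSmall f C :=
  ⟨{C}, countable_singleton _, by simp [h, h'], by simp⟩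

theorem LNSmall.iUnion [MeasurableSpace Z] {f : Z → Y} {κ : Type*} [Countable κ]
    {B : κ → Set Z} (h : ∀ k, LNSmall f (B k)) : LNSmall f (⋃ k, B k) := by
  choose 𝒞 hc h1 h2 using h
  refine ⟨⋃ k, 𝒞 k, countable_iUnion hc, ?_, ?_⟩
  · intro C hC
    obtain ⟨k, hk⟩ := mem_iUnion.1 hC
    exact h1 k C hk
  · rw [sUnion_iUnion]
    exact iUnion_congr h2

theorem LNSmall.union [MeasurableSpace Z] {f : Z → Y} 
    {B C : Set Z} (h : LNSmall f B) (h' : LNSmall f C) : LNSmall f (B ∪ C) := by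
  rw [union_eq_iUnion]
  exact LNSmall.iUnion (fun b => by cases b <;> simpa)

theorem analytic_inter [TopologicalSpace Z] [T2Space Z] {s t : Set Z} (hs : AnalyticSet s)
    (ht : AnalyticSet t) : AnalyticSet (s ∩ t) := by
  rw [inter_eq_iInter]
  exact AnalyticSet.iInter (fun b => by cases b <;> simpa)

/-- Reflection: an analytic set on which `f` is injective extends to a Borel one. -/
theorem exists_injOn_superset [TopologicalSpace Z] [PolishSpace Z] [MeasurableSpace Z]
    [BorelSpace Z] [TopologicalSpace Y] [T2Space Y] 
    {f : Z → Y} (hf : Continuous f) {A : Set Z} (hA : AnalyticSet A) (hi : InjOn f A) :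
    ∃ C, A ⊆ C ∧ MeasurableSet C ∧ InjOn f C := by
  let N : Set Z → Set Z := fun A => Prod.snd '' ((Prod.fst ⁻¹' A) ∩
    ({p : Z × Z | f p.1 = f p.2} ∩ {p : Z × Z | p.1 = p.2}ᶜ))
  have hN : ∀ A, AnalyticSet A → AnalyticSet (N A) := by
    intro A hA
    refine AnalyticSet.image_of_continuous ?_ continuous_snd
    refine analytic_inter (hA.preimage continuous_fst) ?_
    refine analytic_inter (IsClosed.analyticSet (isClosed_eq (by fun_prop) (by fun_prop))) ?_
    refine MeasurableSet.analyticSet ?_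
    exact (isClosed_eq continuous_fst continuous_snd).measurableSet.compl
  have memN : ∀ A z, z ∈ N A ↔ ∃ w ∈ A, f w = f z ∧ w ≠ z := by
    intro A z
    simp only [N, mem_image, mem_inter_iff, mem_preimage, mem_ofPred_eq, mem_compl_iff]
    constructor
    · rintro ⟨⟨w, z'⟩, ⟨h1, h2, h3⟩, rfl⟩
      exact ⟨w, h1, h2, h3⟩
    · rintro ⟨w, h1, h2, h3⟩
      exact ⟨(w, z), ⟨h1, h2, h3⟩, rfl⟩
  obtain ⟨B1, h1, h1', hm1⟩ := hA.measurablySeparable (hN A hA) (by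
    rw [Set.disjoint_left]
    intro z hz hz'
    obtain ⟨w, hw, h2, h3⟩ := (memN _ _).1 hz'
    exact h3 (hi hw hz h2))
  obtain ⟨B2, h2, h2', hm2⟩ := hA.measurablySeparable (hN B1 hm1.analyticSet) (by
    rw [Set.disjoint_left]
    intro z hz hz'
    obtain ⟨w, hw, h2, h3⟩ := (memN _ _).1 hz'
    exact Set.disjoint_left.1 h1' ((memN _ _).2 ⟨z, hz, h2.symm, h3.symm⟩) hw)
  refine ⟨B1 ∩ B2, subset_inter h1 h2, hm1.inter hm2, ?_⟩
  intro x hx y hy hxy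
  by_contra hne
  exact Set.disjoint_left.1 h2' ((memN _ _).2 ⟨x, hx.1, hxy, hne⟩) hy.2

theorem LNBig.two [TopologicalSpace Z] [PolishSpace Z] [MeasurableSpace Z]
    [BorelSpace Z] [TopologicalSpace Y] [T2Space Y] 
    {f : Z → Y} (hf : Continuous f) {ι : Type*} [Finite ι] {U : ι → Set Z}
    (hU : ∀ i, MeasurableSet (U i)) (hbig : LNBig f U) (s : Finset ι) :
    ∀ B, LNSmall f B → ∃ x, (∀ i, ∃ z ∈ U i, z ∉ B ∧ f z = x) ∧
      ∀ i ∈ s, ∃ z ∈ U i, ∃ w ∈ U i, z ≠ w ∧ z ∉ B ∧ w ∉ B ∧ f z = x ∧ f w = x := by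
  classical
  induction s using Finset.induction_on with
  | empty =>
    intro B hB
    obtain ⟨x, hx⟩ := hbig B hB
    exact ⟨x, hx, by simp⟩
  | insert i s his ih =>
    intro B hB
    by_contra hcon
    have hBm := hB.measurableSet
    let G1 : ι → Set Y := fun j => f '' (U j \ B)
    let G2 : ι → Set Y := fun j => (f ∘ Prod.fst) ''
      (((U j \ B) ×ˢ (U j \ B) ∩ {p : Z × Z | p.1 = p.2}ᶜ) ∩ {p : Z × Z | f p.1 = f p.2})
    have hG1 : ∀ j, AnalyticSet (G1 j) := fun j =>
      ((hU j).diff hBm).analyticSet.image_of_continuous hf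
    have hG2 : ∀ j, AnalyticSet (G2 j) := fun j => by
      refine AnalyticSet.image_of_continuous ?_ (hf.comp continuous_fst)
      refine MeasurableSet.analyticSet ?_
      refine MeasurableSet.inter (MeasurableSet.inter ?_ ?_) ?_
      · exact ((hU j).diff hBm).prod ((hU j).diff hBm)
      · exact (isClosed_eq continuous_fst continuous_snd).measurableSet.compl
      · exact (isClosed_eq (by fun_prop) (by fun_prop)).measurableSet
    have : Nonempty ι := ⟨i⟩
    let A : Set Z := (U i \ B) ∩ f ⁻¹' ((⋂ j, G1 j) ∩ ⋂ j, (if j ∈ s then G2 j else G1 j))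
    have hA : AnalyticSet A := by
      refine analytic_inter ((hU i).diff hBm).analyticSet (AnalyticSet.preimage ?_ hf)
      refine analytic_inter (AnalyticSet.iInter hG1) (AnalyticSet.iInter fun j => ?_)
      split_ifs
      · exact hG2 j
      · exact hG1 j
    have key : ∀ z, z ∈ U i → z ∉ B → (∀ j, ∃ w ∈ U j, w ∉ B ∧ f w = f z) →
        (∀ j ∈ s, ∃ u ∈ U j, ∃ w ∈ U j, u ≠ w ∧ u ∉ B ∧ w ∉ B ∧ f u = f z ∧ f w = f z) →
        z ∈ A := by
      intro z hz hzB h1 h2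
      have hh : ∀ j, f z ∈ G1 j := fun j => by
        obtain ⟨w, hw, hwB, hwz⟩ := h1 j
        exact ⟨w, ⟨hw, hwB⟩, hwz⟩
      refine ⟨⟨hz, hzB⟩, mem_iInter.2 hh, mem_iInter.2 fun j => ?_⟩
      split_ifs with hj
      · obtain ⟨u, hu, w, hw, hne, huB, hwB, e1, e2⟩ := h2 j hj
        exact ⟨(u, w), ⟨⟨⟨⟨hu, huB⟩, ⟨hw, hwB⟩⟩, hne⟩, e1.trans e2.symm⟩, e1⟩
      · exact hh j
    have key2 : ∀ z ∈ A, z ∈ U i ∧ z ∉ B ∧ (∀ j, ∃ w ∈ U j, w ∉ B ∧ f w = f z) ∧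
        (∀ j ∈ s, ∃ u ∈ U j, ∃ w ∈ U j, u ≠ w ∧ u ∉ B ∧ w ∉ B ∧ f u = f z ∧ f w = f z) := by
      rintro z ⟨⟨hz, hzB⟩, h1, h2⟩
      refine ⟨hz, hzB, fun j => ?_, fun j hj => ?_⟩
      · obtain ⟨w, hw, e⟩ := mem_iInter.1 h1 j
        exact ⟨w, hw.1, hw.2, e⟩
      · have := mem_iInter.1 h2 j
        rw [if_pos hj] at this
        obtain ⟨⟨u, w⟩, ⟨⟨⟨hu, hw⟩, hne⟩, e⟩, e'⟩ := this
        exact ⟨u, hu.1, w, hw.1, hne, hu.2, hw.2, e', e.symm.trans e'⟩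
    have hinj : InjOn f A := by
      intro z hz w hw hzw
      by_contra hne
      obtain ⟨h1, h2, h3, h4⟩ := key2 z hz
      obtain ⟨h1', h2', -, -⟩ := key2 w hw
      refine hcon ⟨f z, h3, fun j hj => ?_⟩
      rcases Finset.mem_insert.1 hj with rfl | hj
      · exact ⟨z, h1, w, h1', hne, h2, h2', rfl, hzw.symm⟩
      · exact h4 j hj
    obtain ⟨C, hAC, hCm, hCi⟩ := exists_injOn_superset hf hA hinj
    obtain ⟨x, h1, h2⟩ := ih (B ∪ C) (hB.union (LNSmall.of_injOn hCm hCi))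
    obtain ⟨z, hz, hzB, rfl⟩ := h1 i
    refine hzB (Or.inr (hAC (key z hz (fun h => hzB (Or.inl h)) ?_ ?_)))
    · intro j
      obtain ⟨w, hw, hwB, e⟩ := h1 j
      exact ⟨w, hw, fun h => hwB (Or.inl h), e⟩
    · intro j hj
      obtain ⟨u, hu, w, hw, hne, huB, hwB, e⟩ := h2 j hj
      exact ⟨u, hu, w, hw, hne, fun h => huB (Or.inl h), fun h => hwB (Or.inl h), e⟩

theorem LNBig.step [MetricSpace Z] [CompleteSpace Z] [SecondCountableTopology Z]
    [MeasurableSpace Z]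
    [BorelSpace Z] [TopologicalSpace Y] [T2Space Y]
    {f : Z → Y} (hf : Continuous f) {ι : Type*} [Finite ι] {U : ι → Set Z}
    (hU : ∀ i, IsOpen (U i)) (hbig : LNBig f U) {ε : ℝ} (hε : 0 < ε) :
    ∃ V : ι × Bool → Set Z, (∀ i, IsOpen (V i)) ∧ LNBig f V ∧
      (∀ i b, closure (V (i, b)) ⊆ U i) ∧ (∀ i, Disjoint (V (i, false)) (V (i, true))) ∧
      ∀ k, ∀ x ∈ V k, ∀ y ∈ V k, dist x y ≤ ε := by
  by_contra! hcon
  let bs := TopologicalSpace.countableBasis Z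
  have hbs : TopologicalSpace.IsTopologicalBasis bs := TopologicalSpace.isBasis_countableBasis Z
  have hbc : Countable bs := (TopologicalSpace.countable_countableBasis Z).to_subtype
  let K : Type _ := {V : ι × Bool → bs // ¬ LNBig f (fun k => (V k : Set Z))}
  have hK : ∀ V : K, ∃ B, LNSmall f B ∧ ¬ ∃ x, ∀ i, ∃ z ∈ ((V.1 i : bs) : Set Z), z ∉ B ∧ f z = x := by
    intro V
    have := V.2
    unfold LNBig at this
    push Not at this ⊢
    exact this
  choose B hB hB' using hK
  have := Fintype.ofFinite ι
  obtain ⟨x, -, hx⟩ := LNBig.two hf (fun i => (hU i).measurableSet) hbig Finset.univ _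
    (LNSmall.iUnion hB)
  have hV : ∀ i, ∃ V W : bs, closure (V : Set Z) ⊆ U i ∧ closure (W : Set Z) ⊆ U i ∧
      Disjoint (V : Set Z) (W : Set Z) ∧
      (∀ x ∈ (V : Set Z), ∀ y ∈ (V : Set Z), dist x y ≤ ε) ∧
      (∀ x ∈ (W : Set Z), ∀ y ∈ (W : Set Z), dist x y ≤ ε) ∧
      (∃ z ∈ (V : Set Z), z ∉ (⋃ k, B k) ∧ f z = x) ∧
      (∃ z ∈ (W : Set Z), z ∉ (⋃ k, B k) ∧ f z = x) := by
    intro i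
    obtain ⟨z, hz, w, hw, hne, hzB, hwB, e1, e2⟩ := hx i (Finset.mem_univ i)
    obtain ⟨O1, O2, ho1, ho2, hz1, hw2, hd⟩ := t2_separation hne
    have small : ∀ p ∈ U i, ∀ O, IsOpen O → p ∈ O → ∃ V : bs, p ∈ (V : Set Z) ∧
        closure (V : Set Z) ⊆ U i ∧ (V : Set Z) ⊆ O ∧
        (∀ x ∈ (V : Set Z), ∀ y ∈ (V : Set Z), dist x y ≤ ε) := by
      intro p hp O hO hpO
      have hn : (U i ∩ O) ∩ Metric.ball p (ε / 2) ∈ nhds p :=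
        (((hU i).inter hO).inter Metric.isOpen_ball).mem_nhds
          ⟨⟨hp, hpO⟩, Metric.mem_ball_self (by linarith)⟩
      obtain ⟨V, hVb, hpV, hVs⟩ := hbs.exists_closure_subset hn
      refine ⟨⟨V, hVb⟩, hpV, fun a ha => (hVs ha).1.1,
        fun a ha => (hVs (subset_closure ha)).1.2, fun a ha b hb => ?_⟩
      have h1 := (hVs (subset_closure ha)).2
      have h2 := (hVs (subset_closure hb)).2
      rw [Metric.mem_ball] at h1 h2
      have := dist_triangle_right a b p
      linarith
    obtain ⟨V, v1, v2, v3, v4⟩ := small z hz O1 ho1 hz1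
    obtain ⟨W, w1, w2, w3, w4⟩ := small w hw O2 ho2 hw2
    exact ⟨V, W, v2, w2, hd.mono v3 w3, v4, w4, ⟨z, v1, hzB, e1⟩, ⟨w, w1, hwB, e2⟩⟩
  choose V W h1 h2 h3 h4 h5 h6 h7 using hV
  let P : ι × Bool → bs := fun k => if k.2 then W k.1 else V k.1
  have hP : ∀ k, ∃ z ∈ (P k : Set Z), z ∉ (⋃ k, B k) ∧ f z = x := by
    rintro ⟨i, b⟩
    cases b
    · simpa [P] using h6 i
    · simpa [P] using h7 i
  by_cases hbigP : LNBig f (fun k => (P k : Set Z))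
  · obtain ⟨k, a, ha, b, hb, hlt⟩ := hcon (fun k => (P k : Set Z)) (fun k => hbs.isOpen (P k).2)
      hbigP (by rintro i (_ | _) <;> simp [P, h1, h2]) (by intro i; simpa [P] using h3 i)
    obtain ⟨i, b'⟩ := k
    cases b'
    · exact absurd hlt (not_lt.2 (h4 i a (by simpa [P] using ha) b (by simpa [P] using hb)))
    · exact absurd hlt (not_lt.2 (h5 i a (by simpa [P] using ha) b (by simpa [P] using hb)))
  · refine hB' ⟨P, hbigP⟩ ⟨x, fun k => ?_⟩
    obtain ⟨z, hz, hzB, e⟩ := hP k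
    exact ⟨z, hz, fun h => hzB (mem_iUnion.2 ⟨_, h⟩), e⟩

def Lv : ℕ → Type
  | 0 => Unit
  | n + 1 => Lv n × Bool

theorem Lv.finite : ∀ n, Finite (Lv n)
  | 0 => inferInstanceAs (Finite Unit)
  | n + 1 => by
    have := Lv.finite n
    exact inferInstanceAs (Finite (Lv n × Bool))

def br (α : ℕ → Bool) : ∀ n, Lv n
  | 0 => ()
  | n + 1 => (br α n, α n)

theorem br_eq {α β : ℕ → Bool} : ∀ n, (∀ m < n, α m = β m) → br α n = br β n
  | 0, _ => rfl
  | n + 1, h => by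
    have h1 := br_eq n fun m hm => h m (by omega)
    have h2 := h n (by omega)
    simp only [br, h1, h2]
    rfl

theorem exists_uncountable_fiber [MetricSpace Z] [CompleteSpace Z] [SecondCountableTopology Z]
    [MeasurableSpace Z]
    [BorelSpace Z] [TopologicalSpace Y] [T2Space Y]
    {f : Z → Y} (hf : Continuous f) (hbig : LNBig f (fun _ : Unit => (univ : Set Z))) :
    ∃ x, ¬ (f ⁻¹' {x}).Countable := by
  let St : ℕ → Type _ := fun n => {U : Lv n → Set Z // (∀ i, IsOpen (U i)) ∧ LNBig f U}
  have hstep : ∀ n (U : St n), ∃ V : St (n + 1), (∀ i b, closure (V.1 (i, b)) ⊆ U.1 i) ∧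
      (∀ i, Disjoint (V.1 (i, false)) (V.1 (i, true))) ∧
      ∀ k, ∀ x ∈ V.1 k, ∀ y ∈ V.1 k, dist x y ≤ (1 / 2 : ℝ) ^ n := by
    intro n U
    have := Lv.finite n
    obtain ⟨V, h1, h2, h3⟩ := LNBig.step hf U.2.1 U.2.2 (ε := (1 / 2 : ℝ) ^ n) (by positivity)
    exact ⟨⟨V, h1, h2⟩, h3⟩
  choose nx hn1 hn2 hn3 using hstep
  let U : ∀ n, St n := fun n => Nat.rec (motive := St)
    ⟨fun _ => univ, fun _ => isOpen_univ, hbig⟩ nx n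
  have hU1 : ∀ n i b, closure ((U (n + 1)).1 (i, b)) ⊆ (U n).1 i := fun n => hn1 n (U n)
  have hU2 : ∀ n i, Disjoint ((U (n + 1)).1 (i, false)) ((U (n + 1)).1 (i, true)) :=
    fun n => hn2 n (U n)
  have hU3 : ∀ n k, ∀ x ∈ (U (n + 1)).1 k, ∀ y ∈ (U (n + 1)).1 k, dist x y ≤ (1 / 2 : ℝ) ^ n :=
    fun n => hn3 n (U n)
  have hz := fun n => (U n).2.2 ∅ (LNSmall.empty f)
  choose x z hzU _ hzx using hz
  have anti : ∀ α, Antitone fun n => (U n).1 (br α n) := fun α =>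
    antitone_nat_of_succ_le fun n => subset_closure.trans (hU1 n (br α n) (α n))
  have anti' : ∀ α n m, n ≤ m → ∀ p ∈ (U m).1 (br α m), p ∈ (U n).1 (br α n) :=
    fun α n m h p hp => anti α h hp
  have h0 : Filter.Tendsto (fun n : ℕ => (1 / 2 : ℝ) ^ n) Filter.atTop (nhds 0) :=
    tendsto_pow_atTop_nhds_zero_of_lt_one (by norm_num) (by norm_num)
  have hlim : ∀ α, ∃ p, Filter.Tendsto (fun n => z (n + 1) (br α (n + 1))) Filter.atTop (nhds p) := by
    intro α
    refine cauchySeq_tendsto_of_complete (cauchySeq_of_le_tendsto_0 _ ?_ h0)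
    intro n m N hn hm
    exact hU3 N (br α (N + 1)) _ (anti' α (N + 1) (n + 1) (by omega) _ (hzU (n + 1) (br α (n + 1)))) _
      (anti' α (N + 1) (m + 1) (by omega) _ (hzU (m + 1) (br α (m + 1))))
  choose φ hφ using hlim
  have hmem : ∀ α n, φ α ∈ (U n).1 (br α n) := by
    intro α n
    refine hU1 n (br α n) (α n) (mem_closure_of_tendsto (hφ α) ?_)
    filter_upwards [Filter.eventually_ge_atTop n] with m hm
    exact anti' α (n + 1) (m + 1) (by omega) _ (hzU (m + 1) (br α (m + 1)))
  have hconst : ∀ α β, f (φ α) = f (φ β) := by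
    have : ∀ α, Filter.Tendsto (fun n => x (n + 1)) Filter.atTop (nhds (f (φ α))) := by
      intro α
      have := (hf.tendsto _).comp (hφ α)
      refine this.congr fun n => ?_
      exact hzx _ _
    exact fun α β => tendsto_nhds_unique (this α) (this β)
  have hinj : Function.Injective φ := by
    intro α β hab
    by_contra hne
    have hex : ∃ n, α n ≠ β n := Function.ne_iff.1 hne
    classical
    let n := Nat.find hex
    have hn : α n ≠ β n := Nat.find_spec hex
    have hlt : ∀ m < n, α m = β m := fun m hm => not_not.1 (Nat.find_min hex hm)
    have e := br_eq n hlt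
    have m1 : φ α ∈ (U (n + 1)).1 (br α n, α n) := hmem α (n + 1)
    have m2 : φ α ∈ (U (n + 1)).1 (br α n, β n) := by
      rw [hab, e]; exact hmem β (n + 1)
    have hd := Set.disjoint_left.1 (hU2 n (br α n))
    cases ha : α n <;> cases hb : β n <;> rw [ha] at m1 <;> rw [hb] at m2
    · exact hn (ha.trans hb.symm)
    · exact hd m1 m2
    · exact hd m2 m1
    · exact hn (ha.trans hb.symm)
  refine ⟨f (φ fun _ => false), fun hc => ?_⟩
  have hc' : Countable (f ⁻¹' {f (φ fun _ => false)}) := hc.to_subtype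
  have : Countable (ℕ → Bool) :=
    Function.Injective.countable (f := fun α => (⟨φ α, hconst _ _⟩ : f ⁻¹' {f (φ fun _ => false)}))
      (fun α β h => hinj (congrArg Subtype.val h))
  obtain ⟨g, hg⟩ := exists_injective_nat (ℕ → Bool)
  classical
  refine Function.cantor_injective (fun s : Set ℕ => g fun n => decide (n ∈ s)) ?_
  intro s t hst
  ext n
  simpa using congrFun (hg hst) n

/-- Lusin-Novikov for countable-to-one Borel maps. -/
theorem lusin_novikov [MeasurableSpace Z] [StandardBorelSpace Z] [MeasurableSpace Y]
    [StandardBorelSpace Y] {f : Z → Y} (hf : Measurable f)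
    (hc : ∀ x, (f ⁻¹' {x}).Countable) :
    ∃ C : ℕ → Set Z, (∀ n, MeasurableSet (C n)) ∧ (∀ n, InjOn f (C n)) ∧ ⋃ n, C n = univ := by
  have hs : LNSmall f univ := by
    let := upgradeStandardBorel Y
    obtain ⟨t0, hb0, hp0⟩ := ‹StandardBorelSpace Z›
    obtain ⟨t, hle, hcont, hp⟩ := hf.exists_continuous
    have hb : @BorelSpace Z t _ := by
      refine @BorelSpace.mk _ t _ ?_
      rw [hb0.measurable_eq]
      exact (borel_eq_borel_of_le hp hp0 hle).symm
    clear hb0 hp0 hle t0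
    let := t
    let := TopologicalSpace.upgradeIsCompletelyMetrizable Z
    by_contra hns
    have hbig : LNBig f (fun _ : Unit => (univ : Set Z)) := by
      intro B hB
      have : ∃ z, z ∉ B := by
        by_contra! h
        exact hns ((eq_univ_of_forall h) ▸ hB)
      obtain ⟨z, hz⟩ := this
      exact ⟨f z, fun _ => ⟨z, trivial, hz, rfl⟩⟩
    obtain ⟨x, hx⟩ := exists_uncountable_fiber hcont hbig
    exact hx (hc x)
  obtain ⟨𝒞, h1, h2, h3⟩ := hs
  have h1' : (insert ∅ 𝒞).Countable := h1.insert ∅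
  obtain ⟨C, hC⟩ := h1'.exists_eq_range (insert_nonempty _ _)
  have hCm : ∀ n, MeasurableSet (C n) ∧ InjOn f (C n) := by
    intro n
    have : C n ∈ insert ∅ 𝒞 := hC ▸ mem_range_self n
    rcases this with h | h
    · rw [h]; simp
    · exact h2 _ h
  refine ⟨C, fun n => (hCm n).1, fun n => (hCm n).2, ?_⟩
  rw [← sUnion_range, ← hC, sUnion_insert, ← h3, empty_union]

end LN

theorem lintegral_image [MeasurableSpace X] [StandardBorelSpace X] {μ : Measure X} {B : Set X}
    (hB : MeasurableSet B) {F : X → X} (hF : Measurable F) (hFi : InjOn F B) {w : X → ℝ≥0∞}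
    (hw : Measurable w)
    (h : ∀ A, MeasurableSet A → A ⊆ B → μ (F '' A) = ∫⁻ x in A, w x ∂μ)
    {g : X → ℝ≥0∞} (hg : Measurable g) :
    ∫⁻ y in F '' B, g y ∂μ = ∫⁻ x in B, w x * g (F x) ∂μ := by
  have e : μ.restrict (F '' B) = ((μ.restrict B).withDensity w).map F := by
    ext A hA
    rw [Measure.restrict_apply hA, Measure.map_apply hF hA, withDensity_apply _ (hF hA),
      Measure.restrict_restrict (hF hA), ← h _ ((hF hA).inter hB) inter_subset_right,
      image_preimage_inter]
  rw [e, lintegral_map hg hF]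
  exact lintegral_withDensity_eq_lintegral_mul _ hw (hg.comp hF)

theorem piece [MeasurableSpace X] [StandardBorelSpace X]
    (E : X → X → Prop)
    (ρ : X → X → ℝ) (hρ : IsCocycle E ρ)
    (R S : Set (X × X))
    (hRE : ∀ p ∈ R, E (Prod.fst p) (Prod.snd p)) (hSE : ∀ p ∈ S, E (Prod.fst p) (Prod.snd p))
    (μ : Measure X) (hμ : IsInvariantRel (R ∪ S) ρ μ) (T : X → X) (hT : Measurable T)
    (Q : Set (X × X)) (hQ : MeasurableSet Q) (h1 : InjOn Prod.fst Q) (h2 : InjOn Prod.snd Q)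
    (hTi : InjOn T (Prod.fst '' Q))
    (hQR : ∀ p ∈ Q, (T p.1, p.2) ∈ R) (hQS : ∀ p ∈ Q, (p.2, p.1) ∈ S) :
    μ (T '' (Prod.fst '' Q)) = ∫⁻ x in Prod.fst '' Q, ENNReal.ofReal (ρ (T x) x) ∂μ := by
  have hBm : MeasurableSet (Prod.fst '' Q) := hQ.image_of_measurable_injOn measurable_fst h1
  have hBm2 : MeasurableSet (Prod.snd '' Q) := hQ.image_of_measurable_injOn measurable_snd h2
  have : StandardBorelSpace Q := hQ.standardBorel
  have e1 : MeasurableEmbedding (fun p : Q => p.1.1) :=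
    Measurable.measurableEmbedding (by fun_prop) (fun p q h => Subtype.ext (h1 p.2 q.2 h))
  have e2 : MeasurableEmbedding (fun p : Q => p.1.2) :=
    Measurable.measurableEmbedding (by fun_prop) (fun p q h => Subtype.ext (h2 p.2 q.2 h))
  obtain ⟨F, hF, hF'⟩ := e1.exists_measurable_extend (g := fun p : Q => p.1.2) (by fun_prop)
    (fun x => ⟨x⟩)
  obtain ⟨G, hG, hG'⟩ := e2.exists_measurable_extend (g := fun p : Q => T p.1.1) (by fun_prop)
    (fun x => ⟨x⟩)
  have hFp : ∀ p ∈ Q, F p.1 = p.2 := fun p hp => congrFun hF' ⟨p, hp⟩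
  have hGp : ∀ p ∈ Q, G p.2 = T p.1 := fun p hp => congrFun hG' ⟨p, hp⟩
  have hFi : InjOn F (Prod.fst '' Q) := by
    rintro _ ⟨p, hp, rfl⟩ _ ⟨q, hq, rfl⟩ h
    rw [hFp p hp, hFp q hq] at h
    rw [h2 hp hq h]
  have him : F '' (Prod.fst '' Q) = Prod.snd '' Q := by
    rw [image_image]
    exact image_congr hFp
  have him2 : G '' (Prod.snd '' Q) = T '' (Prod.fst '' Q) := by
    rw [image_image, image_image]
    exact image_congr hGp
  have hGi : InjOn G (Prod.snd '' Q) := by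
    rintro _ ⟨p, hp, rfl⟩ _ ⟨q, hq, rfl⟩ h
    rw [hGp p hp, hGp q hq] at h
    rw [h1 hp hq (hTi (mem_image_of_mem _ hp) (mem_image_of_mem _ hq) h)]
  have hm := hρ.1
  have hwF : Measurable fun x => ENNReal.ofReal (ρ (F x) x) :=
    (hm.comp (hF.prodMk measurable_id)).ennreal_ofReal
  have hwG : Measurable fun x => ENNReal.ofReal (ρ (G x) x) :=
    (hm.comp (hG.prodMk measurable_id)).ennreal_ofReal
  rw [← him2, hμ _ G hBm2 hG hGi, ← him, lintegral_image hBm hF hFi hwF _ hwG]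
  · refine setLIntegral_congr_fun hBm ?_
    rintro _ ⟨p, hp, rfl⟩
    have hS := hSE _ (hQS p hp)
    have hR := hRE _ (hQR p hp)
    simp only [hFp p hp, hGp p hp]
    rw [← ENNReal.ofReal_mul (hρ.2.1 hS).le, hρ.2.2 hR hS, mul_comm]
  · intro A hA hAB
    refine hμ A F hA hF (hFi.mono hAB) fun x hx => Or.inr ?_
    obtain ⟨p, hp, rfl⟩ := hAB hx
    rw [hFp p hp]
    exact hQS p hp
  · rintro _ ⟨p, hp, rfl⟩
    rw [hGp p hp]
    exact Or.inl (hQR p hp)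

/-- A Borel measure invariant with respect to the restriction of `ρ` to `R ∪ S` is invariant
with respect to the restriction of `ρ` to the composition `R ∘ S`. -/
theorem stmt14 [MeasurableSpace X] [StandardBorelSpace X]
    (E : X → X → Prop) (hE : IsCBER E)
    (ρ : X → X → ℝ) (hρ : IsCocycle E ρ)
    (R S : Set (X × X)) (hRm : MeasurableSet R) (hSm : MeasurableSet S)
    (hRE : ∀ p ∈ R, E (Prod.fst p) (Prod.snd p)) (hSE : ∀ p ∈ S, E (Prod.fst p) (Prod.snd p))
    (μ : Measure X) (hμ : IsInvariantRel (R ∪ S) ρ μ) :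
    IsInvariantRel {p : X × X | ∃ y : X, (p.1, y) ∈ R ∧ (y, p.2) ∈ S} ρ μ := by
  intro B T hB hT hTi hBT
  let P : Set (X × X) := {p | p.1 ∈ B ∧ (T p.1, p.2) ∈ R ∧ (p.2, p.1) ∈ S}
  have hP : MeasurableSet P := by
    refine (measurable_fst hB).inter (MeasurableSet.inter ?_ ?_)
    · exact ((hT.comp measurable_fst).prodMk measurable_snd) hRm
    · exact measurable_swap hSm
  have hPs : StandardBorelSpace P := hP.standardBorel
  obtain ⟨C, hCm, hCi, hCu⟩ := lusin_novikov (f := fun p : P => p.1.1) (by fun_prop) (by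
    intro x
    refine MapsTo.countable_of_injOn (f := fun p : P => p.1.2) (t := {y | E x y}) ?_ ?_ (hE.2.2 x)
    · rintro p rfl
      exact hE.1.symm (hSE _ p.2.2.2)
    · rintro p hp q hq h
      exact Subtype.ext (Prod.ext (hp.trans hq.symm) h))
  obtain ⟨D, hDm, hDi, hDu⟩ := lusin_novikov (f := fun p : P => p.1.2) (by fun_prop) (by
    intro y
    refine MapsTo.countable_of_injOn (f := fun p : P => p.1.1) (t := {x | E y x}) ?_ ?_ (hE.2.2 y)
    · rintro p rfl
      exact hSE _ p.2.2.2
    · rintro p hp q hq h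
      exact Subtype.ext (Prod.ext h (hp.trans hq.symm)))
  let Q : ℕ → Set (X × X) := fun k => Subtype.val '' (C k.unpair.1 ∩ D k.unpair.2)
  have hQP : ∀ k, Q k ⊆ P := by
    rintro k _ ⟨p, -, rfl⟩
    exact p.2
  have hQm : ∀ k, MeasurableSet (Q k) := fun k => hP.subtype_image ((hCm _).inter (hDm _))
  have hQ1 : ∀ k, InjOn Prod.fst (Q k) := by
    rintro k _ ⟨p, hp, rfl⟩ _ ⟨q, hq, rfl⟩ h
    rw [hCi _ hp.1 hq.1 h]
  have hQ2 : ∀ k, InjOn Prod.snd (Q k) := by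
    rintro k _ ⟨p, hp, rfl⟩ _ ⟨q, hq, rfl⟩ h
    rw [hDi _ hp.2 hq.2 h]
  let A : ℕ → Set X := fun k => Prod.fst '' Q k
  have hAm : ∀ k, MeasurableSet (A k) := fun k =>
    (hQm k).image_of_measurable_injOn measurable_fst (hQ1 k)
  have hAu : ⋃ k, disjointed A k = B := by
    rw [iUnion_disjointed]
    apply Subset.antisymm
    · refine iUnion_subset fun k => ?_
      rintro _ ⟨p, hp, rfl⟩
      exact (hQP k hp).1
    · intro x hx
      obtain ⟨y, hR, hS⟩ := hBT x hx
      let p : P := ⟨(x, y), hx, hR, hS⟩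
      obtain ⟨n, hn⟩ := mem_iUnion.1 (hCu.symm ▸ mem_univ p : p ∈ ⋃ n, C n)
      obtain ⟨m, hm⟩ := mem_iUnion.1 (hDu.symm ▸ mem_univ p : p ∈ ⋃ n, D n)
      refine mem_iUnion.2 ⟨Nat.pair n m, (x, y), ⟨p, ?_, rfl⟩, rfl⟩
      rw [Nat.unpair_pair]
      exact ⟨hn, hm⟩
  have hdm : ∀ k, MeasurableSet (disjointed A k) := fun k => MeasurableSet.disjointed hAm k
  have hsub : ∀ k, disjointed A k ⊆ B := fun k => hAu ▸ subset_iUnion _ k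
  have hdd := disjoint_disjointed A
  have hpc : ∀ k, μ (T '' disjointed A k) =
      ∫⁻ x in disjointed A k, ENNReal.ofReal (ρ (T x) x) ∂μ := by
    intro k
    have e : disjointed A k = Prod.fst '' (Q k ∩ Prod.fst ⁻¹' (disjointed A k)) := by
      rw [image_inter_preimage]
      exact (inter_eq_self_of_subset_right (disjointed_subset A k)).symm
    rw [e]
    refine piece E ρ hρ R S hRE hSE μ hμ T hT _ ((hQm k).inter (measurable_fst (hdm k)))
      ((hQ1 k).mono inter_subset_left) ((hQ2 k).mono inter_subset_left) ?_ ?_ ?_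
    · rw [← e]
      exact hTi.mono (hsub k)
    · exact fun p hp => (hQP k hp.1).2.1
    · exact fun p hp => (hQP k hp.1).2.2
  rw [← hAu, image_iUnion, measure_iUnion, lintegral_iUnion hdm hdd]
  · exact tsum_congr hpc
  · intro i j hij
    refine (hdd hij).image hTi (hsub i) (hsub j)
  · exact fun k => (hdm k).image_of_measurable_injOn hT (hTi.mono (hsub k))

end CocycleNadkarni
end
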